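/- arXiv:quant-ph/0302002 — 5 statements merged into one kernel-verified Lean document; each statement's English description precedes it below -/
import Mathlib

section
/- Fix n ≥ 1 and d ≥ 0 such that (n² − n + 1)^d < ∏_{i=0}^{n-1}(2^n − 2^i). Then there exists an invertible n×n matrix over 𝔽₂ that cannot be written as a product of at most d transvections. -/
/-- `A` is a transvection matrix over `𝔽₂`: the identity with a single
off-diagonal entry set to `1`. -/
def IsTransvection {n : ℕ} (A : Matrix (Fin n) (Fin n) (ZMod 2)) : Prop :=
  ∃ i j : Fin n, i ≠ j ∧ A = Matrix.transvection i j 1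

/-- `A` is a product of at most `d` transvections. -/
def IsProdOfAtMostTransvections {n : ℕ} (d : ℕ)
    (A : Matrix (Fin n) (Fin n) (ZMod 2)) : Prop :=
  ∃ L : List (Matrix (Fin n) (Fin n) (ZMod 2)),
    L.length ≤ d ∧ (∀ B ∈ L, IsTransvection B) ∧ L.prod = A

open Finset
open scoped Pointwise

section Counting

theorem exists_apply_notMem_of_card_lt {α β : Type*} {f : α → β} (hf : f.Injective)
    {s : Finset β} (hs : #s < Nat.card α) : ∃ a, f a ∉ s := by
  by_contra! hmem
  have hle : Nat.card α ≤ Nat.card s :=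
    Nat.card_le_card_of_injective (fun a ↦ ⟨f a, hmem a⟩)
      fun _ _ hab ↦ hf (congrArg Subtype.val hab)
  rw [Nat.card_eq_finsetCard] at hle
  exact hle.not_gt hs

variable {M : Type*} [Monoid M] {T : Finset M} {d : ℕ}

theorem list_prod_mem_pow_length [DecidableEq M] {L : List M} (hL : ∀ x ∈ L, x ∈ T) :
    L.prod ∈ T ^ L.length :=
  mem_pow.2 ⟨fun i ↦ ⟨L.get i, hL _ (L.get_mem i)⟩, congrArg List.prod (List.ofFn_get L)⟩

-- Padding with the identity makes words of length at most `d` into words of length exactly `d`.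
theorem list_prod_mem_insert_one_pow [DecidableEq M] {L : List M} (hd : L.length ≤ d)
    (hL : ∀ x ∈ L, x ∈ T) : L.prod ∈ insert 1 T ^ d :=
  pow_subset_pow (subset_insert 1 T) (mem_insert_self 1 T) hd (list_prod_mem_pow_length hL)

theorem card_insert_one_pow_le [DecidableEq M] : #(insert 1 T ^ d) ≤ (#T + 1) ^ d :=
  card_pow_le.trans (Nat.pow_le_pow_left (card_insert_le 1 T) d)

theorem exists_unit_forall_list_prod_ne (hT : (#T + 1) ^ d < Nat.card Mˣ) :
    ∃ u : Mˣ, ∀ L : List M, L.length ≤ d → (∀ x ∈ L, x ∈ T) → L.prod ≠ u := by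
  classical
  obtain ⟨u, hu⟩ : ∃ u : Mˣ, (u : M) ∉ insert 1 T ^ d :=
    exists_apply_notMem_of_card_lt Units.val_injective (card_insert_one_pow_le.trans_lt hT)
  exact ⟨u, fun L hd hL hprod ↦ hu (hprod ▸ list_prod_mem_insert_one_pow hd hL)⟩

end Counting

section Transvections

variable {ι R : Type*} [Fintype ι] [DecidableEq ι] [CommRing R] [DecidableEq R]

variable (ι) in
/-- The finite set of all transvection matrices `1 + c Eᵢⱼ` with `i ≠ j`, for a fixed
coefficient `c`. -/
def transvectionsWithCoeff (c : R) : Finset (Matrix ι ι R) :=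
  (univ : Finset ι).offDiag.image fun p ↦ Matrix.transvection p.1 p.2 c

theorem card_transvectionsWithCoeff_le (c : R) :
    #(transvectionsWithCoeff ι c) ≤ Fintype.card ι ^ 2 - Fintype.card ι := by
  refine card_image_le.trans_eq ?_
  rw [offDiag_card, card_univ, sq]

theorem isTransvection_iff_mem_transvectionsWithCoeff {n : ℕ}
    {A : Matrix (Fin n) (Fin n) (ZMod 2)} :
    IsTransvection A ↔ A ∈ transvectionsWithCoeff (Fin n) (1 : ZMod 2) := by
  simp [IsTransvection, transvectionsWithCoeff, eq_comm]

end Transvections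

theorem card_GL_field_eq_prod_range (F : Type*) [Field F] [Fintype F] (n : ℕ) :
    Nat.card (GL (Fin n) F) =
      ∏ i ∈ range n, (Fintype.card F ^ n - Fintype.card F ^ i) := by
  rw [Matrix.card_GL_field, Fin.prod_univ_eq_prod_range
    (fun i ↦ Fintype.card F ^ n - Fintype.card F ^ i)]

/-- If `(n² − n + 1)^d < ∏_{i=0}^{n-1}(2^n − 2^i)`, then some invertible
`n × n` matrix over `𝔽₂` is not a product of at most `d` transvections. -/
theorem exists_not_prod_of_at_most_transvections (n d : ℕ) (hn : 1 ≤ n)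
    (h : (n ^ 2 - n + 1) ^ d < ∏ i ∈ Finset.range n, (2 ^ n - 2 ^ i)) :
    ∃ A : Matrix (Fin n) (Fin n) (ZMod 2), IsUnit A ∧
      ¬ IsProdOfAtMostTransvections d A := by
  have hgen : #(transvectionsWithCoeff (Fin n) (1 : ZMod 2)) ≤ n ^ 2 - n := by
    simpa only [Fintype.card_fin] using card_transvectionsWithCoeff_le (ι := Fin n) (1 : ZMod 2)
  have hcount : (#(transvectionsWithCoeff (Fin n) (1 : ZMod 2)) + 1) ^ d <
      Nat.card (GL (Fin n) (ZMod 2)) :=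
    calc
      _ ≤ (n ^ 2 - n + 1) ^ d := by gcongr
      _ < ∏ i ∈ range n, (2 ^ n - 2 ^ i) := h
      _ = Nat.card (GL (Fin n) (ZMod 2)) := by rw [card_GL_field_eq_prod_range, ZMod.card]
  obtain ⟨u, hu⟩ := exists_unit_forall_list_prod_ne hcount
  refine ⟨u, u.isUnit, ?_⟩
  rintro ⟨L, hd, hL, hprod⟩
  exact hu L hd (fun B hB ↦ isTransvection_iff_mem_transvectionsWithCoeff.1 (hL B hB)) hprod
end

section
/- For every n ≥ 2 there exists an invertible n×n matrix A over 𝔽₂ such that every list of transvections whose product equals A has length at least (n² − n) / log₂(n² − n + 1). -/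
/-!
Over a finite field with `q` elements there are at most `N = (n² - n)(q - 1) + 1` transvections,
the identity included, so at most `N ^ d` matrices are products of `d` or fewer of them. Since
`SLₙ` has at least `q ^ (n² - n)` elements, one of them needs `d` with `q ^ (n² - n) ≤ N ^ d`.
Counting in `SLₙ` rather than `GLₙ` matters for `q > 2`, where a matrix of determinant other than
`1` is no product of transvections at all.
-/

open Matrix

section Monoid

variable {M : Type*} [Monoid M]

open scoped Pointwise

lemma list_prod_mem_finset_pow_length [DecidableEq M] {S : Finset M} {L : List M}
    (hL : ∀ a ∈ L, a ∈ S) : L.prod ∈ S ^ L.length :=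
  Finset.mem_pow.2 ⟨fun i => ⟨L[i], hL _ (L.getElem_mem i.2)⟩, by simp⟩

lemma exists_mem_forall_list_prod_eq_imp_ncard_le_pow_length {S T : Set M} (hS : S.Finite)
    (one_mem : 1 ∈ S) (hT : T.Finite) (hT_nonempty : T.Nonempty) :
    ∃ t ∈ T, ∀ L : List M, (∀ a ∈ L, a ∈ S) → L.prod = t → T.ncard ≤ S.ncard ^ L.length := by
  classical
  lift S to Finset M using hS
  lift T to Finset M using hT
  simp only [Finset.mem_coe, Set.ncard_coe_finset] at one_mem ⊢
  by_contra! h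
  choose! L hLS hL_prod hL_length using h
  obtain ⟨t₀, ht₀, hmax⟩ := T.exists_max_image (fun t => (L t).length) hT_nonempty
  have hT_subset : T ⊆ S ^ (L t₀).length := fun t ht => by
    rw [← hL_prod t ht]
    exact Finset.pow_subset_pow_right one_mem (hmax t ht)
      (list_prod_mem_finset_pow_length (hLS t ht))
  have hT_card : T.card ≤ S.card ^ (L t₀).length :=
    (Finset.card_le_card hT_subset).trans Finset.card_pow_le
  exact (hL_length t₀ ht₀).not_ge hT_card

end Monoid

section Transvection

variable (m R : Type*) [DecidableEq m] [CommRing R]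

lemma one_mem_range_transvectionStruct_toMatrix [Nontrivial m] :
    (1 : Matrix m m R) ∈ Set.range TransvectionStruct.toMatrix := by
  obtain ⟨i, j, hij⟩ := exists_pair_ne m
  exact ⟨⟨i, j, hij, 0⟩, transvection_zero i j⟩

lemma ncard_range_transvectionStruct_toMatrix_le [Fintype m] [Fintype R] :
    (Set.range (TransvectionStruct.toMatrix : TransvectionStruct m R → Matrix m m R)).ncard ≤
      Fintype.card m * (Fintype.card m - 1) * (Fintype.card R - 1) + 1 := by
  classical
  let nonidentity : Finset (Matrix m m R) :=
    (Finset.univ.offDiag ×ˢ {0}ᶜ).image fun p : (m × m) × R => transvection p.1.1 p.1.2 p.2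
  have range_subset : Set.range (TransvectionStruct.toMatrix : TransvectionStruct m R → _) ⊆
      ↑(insert 1 nonidentity) := by
    rintro _ ⟨⟨i, j, hij, c⟩, rfl⟩
    rcases eq_or_ne c 0 with rfl | hc
    · simp
    · exact Finset.mem_insert_of_mem (Finset.mem_image.2 ⟨((i, j), c), by simp [hij, hc], rfl⟩)
  calc _ ≤ (insert 1 nonidentity).card :=
      Set.ncard_coe_finset _ ▸ Set.ncard_le_ncard range_subset
    _ ≤ nonidentity.card + 1 := Finset.card_insert_le _ _
    _ ≤ (Finset.univ.offDiag ×ˢ {0}ᶜ : Finset ((m × m) × R)).card + 1 := by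
      gcongr
      exact Finset.card_image_le
    _ = _ := by simp [Finset.card_compl, Finset.offDiag_card, Nat.mul_sub]

lemma IsTransvection.mem_range_transvectionStruct_toMatrix {n : ℕ}
    {A : Matrix (Fin n) (Fin n) (ZMod 2)} (hA : IsTransvection A) :
    A ∈ Set.range TransvectionStruct.toMatrix := by
  obtain ⟨i, j, hij, rfl⟩ := hA
  exact ⟨⟨i, j, hij, 1⟩, rfl⟩

end Transvection

section SpecialLinearGroup

lemma card_specialLinearGroup_mul_card_units (m R : Type*) [Fintype m] [DecidableEq m]
    [Nonempty m] [CommRing R] :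
    Nat.card (SpecialLinearGroup m R) * Nat.card Rˣ = Nat.card (GL m R) := by
  let det : GL m R →* Rˣ := GeneralLinearGroup.det
  have range_toGL : (SpecialLinearGroup.toGL : SpecialLinearGroup m R →* GL m R).range =
      det.ker := by
    ext g
    refine ⟨?_, fun hg => ⟨⟨g, congrArg Units.val hg⟩, Units.ext rfl⟩⟩
    rintro ⟨A, rfl⟩
    exact Units.ext A.det_coe
  have card_ker : Nat.card det.ker = Nat.card (SpecialLinearGroup m R) := by
    rw [← range_toGL]
    exact (Nat.card_congr (MonoidHom.ofInjective SpecialLinearGroup.toGL_injective).toEquiv).symm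
  have index_ker : det.ker.index = Nat.card Rˣ := by
    rw [Subgroup.index_ker, MonoidHom.range_eq_top.2 GeneralLinearGroup.det_surjective,
      Subgroup.card_top]
  rw [← card_ker, ← index_ker, Subgroup.card_mul_index]

variable (n : ℕ) (K : Type*) [Field K] [Fintype K]

local notation "q" => Fintype.card K

lemma card_specialLinearGroup_fin_succ :
    Nat.card (SpecialLinearGroup (Fin (n + 1)) K) =
      (∏ i : Fin n, (q ^ (n + 1) - q ^ (i : ℕ))) * q ^ n := by
  have units_pos : 0 < q - 1 := Nat.sub_pos_of_lt Fintype.one_lt_card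
  have last_factor : q ^ (n + 1) - q ^ n = q ^ n * (q - 1) := by
    rw [pow_succ, Nat.mul_sub, mul_one]
  have card_mul := card_specialLinearGroup_mul_card_units (Fin (n + 1)) K
  rw [Nat.card_units, Nat.card_eq_fintype_card (α := K), card_GL_field, Fin.prod_univ_castSucc,
    Fin.val_last, last_factor, ← mul_assoc] at card_mul
  exact Nat.eq_of_mul_eq_mul_right units_pos card_mul

lemma pow_le_card_specialLinearGroup_fin :
    q ^ (n * (n - 1)) ≤ Nat.card (SpecialLinearGroup (Fin n) K) := by
  cases n with
  | zero => simp
  | succ n =>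
    have factor_ge (i : Fin n) : q ^ n ≤ q ^ (n + 1) - q ^ (i : ℕ) := by
      have h_pow : q ^ (i : ℕ) ≤ q ^ n := Nat.pow_le_pow_right Fintype.card_pos i.is_le'
      have h_two : 2 * q ^ n ≤ q ^ (n + 1) := by
        rw [pow_succ']
        gcongr
        exact Fintype.one_lt_card
      omega
    calc q ^ ((n + 1) * n)
      _ = (∏ _i : Fin n, q ^ n) * q ^ n := by
        rw [Fin.prod_const, ← pow_succ, ← pow_mul, mul_comm]
      _ ≤ (∏ i : Fin n, (q ^ (n + 1) - q ^ (i : ℕ))) * q ^ n := by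
        gcongr with i
        exact factor_ge i
      _ = _ := (card_specialLinearGroup_fin_succ n K).symm

end SpecialLinearGroup

lemma exists_det_eq_one_card_pow_le_pow_length (K : Type*) [Field K] [Fintype K] (n : ℕ)
    (hn : 2 ≤ n) :
    ∃ A : Matrix (Fin n) (Fin n) K, A.det = 1 ∧
      ∀ L : List (Matrix (Fin n) (Fin n) K),
        (∀ B ∈ L, B ∈ Set.range TransvectionStruct.toMatrix) → L.prod = A →
          Fintype.card K ^ (n * (n - 1)) ≤
            (n * (n - 1) * (Fintype.card K - 1) + 1) ^ L.length := by
  have : Nontrivial (Fin n) := Fin.nontrivial_iff_two_le.2 hn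
  obtain ⟨A, hA, hA_length⟩ := exists_mem_forall_list_prod_eq_imp_ncard_le_pow_length
    (Set.toFinite _) (one_mem_range_transvectionStruct_toMatrix (Fin n) K)
    (Set.toFinite {A : Matrix (Fin n) (Fin n) K | A.det = 1}) ⟨1, det_one⟩
  refine ⟨A, hA, fun L hL hL_prod => ?_⟩
  calc Fintype.card K ^ (n * (n - 1))
    _ ≤ Nat.card (SpecialLinearGroup (Fin n) K) := pow_le_card_specialLinearGroup_fin n K
    _ ≤ (Set.range TransvectionStruct.toMatrix).ncard ^ L.length := hA_length L hL hL_prod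
    _ ≤ (n * (n - 1) * (Fintype.card K - 1) + 1) ^ L.length := by
      gcongr
      simpa using ncard_range_transvectionStruct_toMatrix_le (Fin n) K

lemma div_logb_le_of_pow_le_pow {b x : ℝ} {k d : ℕ} (hb : 1 < b) (hx : 1 < x)
    (h : b ^ k ≤ x ^ d) : k / Real.logb b x ≤ d := by
  rw [div_le_iff₀ (Real.logb_pos hb hx), ← Real.logb_pow,
    Real.le_logb_iff_rpow_le hb (by positivity), Real.rpow_natCast]
  exact h

theorem exists_matrix_requiring_many_transvections_general (K : Type*) [Field K] [Fintype K]
    (n : ℕ) (hn : 2 ≤ n) :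
    ∃ A : Matrix (Fin n) (Fin n) K, A.det = 1 ∧
      ∀ L : List (Matrix (Fin n) (Fin n) K),
        (∀ B ∈ L, B ∈ Set.range TransvectionStruct.toMatrix) → L.prod = A →
          ((n : ℝ) ^ 2 - n) / Real.logb (Fintype.card K)
            (((n : ℝ) ^ 2 - n) * (Fintype.card K - 1) + 1) ≤ L.length := by
  obtain ⟨A, hA, hA_length⟩ := exists_det_eq_one_card_pow_le_pow_length K n hn
  refine ⟨A, hA, fun L hL hL_prod => ?_⟩
  have hq : 1 < Fintype.card K := Fintype.one_lt_card
  have h_base : 1 < n * (n - 1) * (Fintype.card K - 1) + 1 :=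
    Nat.lt_add_of_pos_left (Nat.mul_pos (Nat.mul_pos (by omega) (by omega)) (by omega))
  have cast_exponent : ((n * (n - 1) : ℕ) : ℝ) = (n : ℝ) ^ 2 - n := by
    rw [Nat.cast_mul, Nat.cast_pred (by omega)]
    ring
  have cast_base : ((n * (n - 1) * (Fintype.card K - 1) + 1 : ℕ) : ℝ) =
      ((n : ℝ) ^ 2 - n) * (Fintype.card K - 1) + 1 := by
    rw [Nat.cast_succ, Nat.cast_mul, cast_exponent, Nat.cast_pred (by omega)]
  rw [← cast_base, ← cast_exponent]
  exact div_logb_le_of_pow_le_pow (mod_cast hq) (mod_cast h_base)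
    (mod_cast hA_length L hL hL_prod)

/-- For every `n ≥ 2` there is an invertible `n × n` matrix over `𝔽₂` such that
every list of transvections with product `A` has length at least
`(n² − n) / log₂(n² − n + 1)`. -/
theorem exists_matrix_requiring_many_transvections (n : ℕ) (hn : 2 ≤ n) :
    ∃ A : Matrix (Fin n) (Fin n) (ZMod 2), IsUnit A ∧
      ∀ L : List (Matrix (Fin n) (Fin n) (ZMod 2)),
        (∀ B ∈ L, IsTransvection B) → L.prod = A →
          ((n : ℝ) ^ 2 - n) / Real.logb 2 ((n : ℝ) ^ 2 - n + 1) ≤ L.length := by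
  obtain ⟨A, hA, hA_length⟩ := exists_matrix_requiring_many_transvections_general (ZMod 2) n hn
  exact ⟨A, (isUnit_iff_isUnit_det A).2 (hA ▸ isUnit_one), fun L hL hL_prod => by
    simpa [ZMod.card, show (2 : ℝ) - 1 = 1 by norm_num] using
      hA_length L (fun B hB => (hL B hB).mem_range_transvectionStruct_toMatrix) hL_prod⟩
end

section
/- For all natural numbers n ≥ 1 and m with 1 ≤ m ≤ n, every invertible n×n matrix over 𝔽₂ can be written as a product of at most n²/m + 3n + m + 2n·2^m + 2nm + 2m·2^m + 2m² transvections. -/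
/-!
Row-reduce `A⁻¹` to the identity one section of `m` columns at a time; the product of the row
operations used is then `A` itself.  Inside a section `D`, ordinary elimination with pivots turns
the block `D × D` into the identity with at most `|D|²` operations.  The rows outside `D` show at
most `2 ^ |D|` patterns on the columns of `D`.  For each pattern, the rows of `D` indexed by its
support add up to it: collect that sum in one of them, add it to all rows showing the pattern, and
undo the collection.  This clears the section with at most `2 |D|` operations per pattern and one
per row.
-/

open Matrix Finset

/-- `a` is a product of at most `t` factors satisfying `P`, that is, its word length with respect
to `P` is at most `t`. -/
def IsProdOfAtMost {M : Type*} [Monoid M] (P : M → Prop) (t : ℕ) (a : M) : Prop :=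
  ∃ L : List M, (∀ b ∈ L, P b) ∧ L.prod = a ∧ L.length ≤ t

namespace IsProdOfAtMost

section Monoid

variable {M : Type*} [Monoid M] {P : M → Prop} {s t : ℕ} {a b : M}

theorem one : IsProdOfAtMost P 0 (1 : M) :=
  ⟨[], by simp, rfl, le_rfl⟩

theorem of_pred (ha : P a) : IsProdOfAtMost P 1 a :=
  ⟨[a], by simpa using ha, by simp, le_rfl⟩

theorem mono (ha : IsProdOfAtMost P s a) (hst : s ≤ t) : IsProdOfAtMost P t a :=
  let ⟨L, hL, hprod, hlen⟩ := ha
  ⟨L, hL, hprod, hlen.trans hst⟩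

theorem mul (ha : IsProdOfAtMost P s a) (hb : IsProdOfAtMost P t b) :
    IsProdOfAtMost P (s + t) (a * b) := by
  obtain ⟨K, hK, rfl, hKs⟩ := ha
  obtain ⟨L, hL, rfl, hLt⟩ := hb
  refine ⟨K ++ L, fun x hx => ?_, List.prod_append, ?_⟩
  · exact (List.mem_append.1 hx).elim (hK x) (hL x)
  · simpa using Nat.add_le_add hKs hLt

theorem isUnit (hP : ∀ x, P x → IsUnit x) (ha : IsProdOfAtMost P t a) : IsUnit a := by
  obtain ⟨L, hL, rfl, -⟩ := ha
  exact List.prod_isUnit fun x hx => hP x (hL x hx)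

end Monoid

theorem one_add_sum {R κ : Type*} [Semiring R] {P : R → Prop} {S : Finset κ} {N : κ → R}
    {t : κ → ℕ} (hN : ∀ i ∈ S, IsProdOfAtMost P (t i) (1 + N i))
    (hmul : (S : Set κ).Pairwise fun i j => N i * N j = 0) :
    IsProdOfAtMost P (∑ i ∈ S, t i) (1 + ∑ i ∈ S, N i) := by
  classical
  induction S using Finset.induction_on with
  | empty => simpa using one
  | insert a S ha ih =>
    have hzero : N a * ∑ i ∈ S, N i = 0 := by
      rw [mul_sum]
      exact sum_eq_zero fun i hi => hmul (mem_insert_self a S) (mem_insert_of_mem hi)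
        (ne_of_mem_of_not_mem hi ha).symm
    have hfactor : 1 + (N a + ∑ i ∈ S, N i) = (1 + N a) * (1 + ∑ i ∈ S, N i) := by
      rw [add_mul, one_mul, mul_add, mul_one, hzero, add_zero]
      abel
    rw [sum_insert ha, sum_insert ha, hfactor]
    exact (hN a (mem_insert_self a S)).mul (ih (fun i hi => hN i (mem_insert_of_mem hi))
      (hmul.mono (by simp)))

end IsProdOfAtMost

theorem eq_one_of_ne_zero_zmod_two {x : ZMod 2} (hx : x ≠ 0) : x = 1 :=
  Fin.eq_one_of_ne_zero x hx

section Vectors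

theorem hammingNorm_le_card_of_forall_notMem {ι : Type*} {β : ι → Type*} [Fintype ι]
    [∀ i, Zero (β i)] [∀ i, DecidableEq (β i)] {v : ∀ i, β i} {D : Finset ι}
    (hv : ∀ i ∉ D, v i = 0) : hammingNorm v ≤ #D :=
  card_le_card fun i hi => by
    by_contra hiD
    exact (mem_filter.1 hi).2 (hv i hiD)

theorem hammingNorm_single_le_one {ι R : Type*} [Fintype ι] [DecidableEq ι] [Zero R]
    [DecidableEq R] (c : ι) (x : R) : hammingNorm (Pi.single c x : ι → R) ≤ 1 :=
  hammingNorm_le_card_of_forall_notMem (D := {c}) fun _ hi =>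
    Pi.single_eq_of_ne (M := fun _ => R) (notMem_singleton.1 hi) x

theorem card_image_le_card_pow {α ι R : Type*} [Fintype ι] [Fintype R] [DecidableEq R]
    [Zero R] {S : Finset α} {f : α → ι → R} {D : Finset ι}
    (hf : ∀ a ∈ S, ∀ i ∉ D, f a i = 0) : #(S.image f) ≤ Fintype.card R ^ #D := by
  classical
  let patterns : Finset (ι → R) := Fintype.piFinset fun i => if i ∈ D then univ else {0}
  have hsub : S.image f ⊆ patterns := by
    refine image_subset_iff.2 fun a ha => Fintype.mem_piFinset.2 fun i => ?_
    by_cases hi : i ∈ D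
    · simp [hi]
    · simp [hi, hf a ha i hi]
  calc #(S.image f) ≤ #patterns := card_le_card hsub
    _ = Fintype.card R ^ #D := by simp [patterns, Fintype.card_piFinset, apply_ite]

theorem sum_image_add_card_fiber_le {α ι R : Type*} [Fintype ι] [Fintype R] [DecidableEq R]
    [Zero R] {S : Finset α} {f : α → ι → R} {D : Finset ι}
    (hf : ∀ a ∈ S, ∀ i ∉ D, f a i = 0) (k : ℕ) :
    ∑ p ∈ S.image f, (k + #{a ∈ S | f a = p}) ≤ k * Fintype.card R ^ #D + #S := by
  rw [sum_add_distrib, ← card_eq_sum_card_image, sum_const, smul_eq_mul, mul_comm]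
  gcongr
  exact card_image_le_card_pow hf

theorem single_add_update_zero {ι R : Type*} [DecidableEq ι] [AddZeroClass R] (v : ι → R)
    (c : ι) : Pi.single c (v c) + Function.update v c 0 = v := by
  ext i
  by_cases hi : i = c
  · subst hi; simp
  · simp [hi]

end Vectors

section MatrixIdentities

variable {ι κ R : Type*} [Fintype ι]

theorem eq_sum_vecMulVec_image_row [NonAssocSemiring R] [DecidableEq (κ → R)]
    (N : Matrix ι κ R) :
    N = ∑ p ∈ univ.image N.row, vecMulVec (fun i => if N.row i = p then 1 else 0) p := by
  ext i j
  simp [Matrix.sum_apply, vecMulVec_apply]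

variable [DecidableEq ι]

theorem one_add_vecMulVec_mul_apply [Semiring R] (u w : ι → R) (B : Matrix ι κ R) (i : ι)
    (j : κ) : ((1 + vecMulVec u w : Matrix ι ι R) * B) i j = B i j + u i * (w ᵥ* B) j := by
  rw [Matrix.add_mul, Matrix.one_mul, vecMulVec_mul, Matrix.add_apply, vecMulVec_apply]

theorem one_add_vecMulVec_conj [CommRing R] [CharP R 2] {c : ι} {u w : ι → R}
    (hwc : w c = 0) (hwu : w ⬝ᵥ u = 0) :
    (1 + vecMulVec (Pi.single c 1) w) * (1 + vecMulVec u (Pi.single c 1)) *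
      (1 + vecMulVec (Pi.single c 1) w) = 1 + vecMulVec u (Pi.single c 1 + w) := by
  set E := vecMulVec (Pi.single c 1) w with hE
  set U := vecMulVec u (Pi.single c 1) with hU
  have hEE : E * E = 0 := by simp [hE, vecMulVec_mul_vecMulVec, hwc]
  have hEU : E * U = 0 := by simp [hE, hU, vecMulVec_mul_vecMulVec, hwu]
  have hUE : U * E = vecMulVec u w := by simp [hE, hU, vecMulVec_mul_vecMulVec]
  have hadd : E + E = 0 := by
    ext i j
    exact CharTwo.add_self_eq_zero _
  calc (1 + E) * (1 + U) * (1 + E)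
      = 1 + (E + E) + U + U * E + E * E + E * U * (1 + E) := by noncomm_ring
    _ = 1 + vecMulVec u (Pi.single c 1 + w) := by
      rw [hadd, hEE, hEU, hUE, vecMulVec_add, zero_mul]
      abel

end MatrixIdentities

section TransvectionCounts

variable {n : ℕ}

theorem IsTransvection.isUnit {A : Matrix (Fin n) (Fin n) (ZMod 2)} (hA : IsTransvection A) :
    IsUnit A := by
  obtain ⟨i, j, hij, rfl⟩ := hA
  exact (isUnit_iff_isUnit_det _).2 (by simp [det_transvection_of_ne i j hij])

theorem isProdOfAtMost_hammingNorm_mul_one_add_vecMulVec {u v : Fin n → ZMod 2}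
    (huv : ∀ i, u i = 0 ∨ v i = 0) :
    IsProdOfAtMost IsTransvection (hammingNorm u * hammingNorm v) (1 + vecMulVec u v) := by
  let S : Finset (Fin n × Fin n) := univ.filter (u · ≠ 0) ×ˢ univ.filter (v · ≠ 0)
  have hne : ∀ p ∈ S, ∀ q ∈ S, p.2 ≠ q.1 := fun p hp q hq hpq => by
    simp only [S, mem_product, mem_filter, mem_univ, true_and] at hp hq
    exact (huv q.1).elim hq.1 (hpq ▸ hp.2)
  have hsum : vecMulVec u v = ∑ p ∈ S, Matrix.single p.1 p.2 1 := by
    rw [matrix_eq_sum_single (vecMulVec u v), ← Fintype.sum_prod_type',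
      ← sum_subset (subset_univ S)]
    · refine sum_congr rfl fun p hp => ?_
      simp only [S, mem_product, mem_filter, mem_univ, true_and] at hp
      rw [vecMulVec_apply, eq_one_of_ne_zero_zmod_two hp.1, eq_one_of_ne_zero_zmod_two hp.2,
        one_mul]
    · intro p _ hp
      have hp' : vecMulVec u v p.1 p.2 = 0 := by
        simpa [S, vecMulVec_apply, or_iff_not_imp_left] using hp
      rw [hp', single_zero]
  have hcard : hammingNorm u * hammingNorm v = ∑ _p ∈ S, 1 := by
    rw [sum_const, smul_eq_mul, mul_one, card_product, hammingNorm, hammingNorm]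
  rw [hsum, hcard]
  exact .one_add_sum (fun p hp => .of_pred ⟨p.1, p.2, (hne p hp p hp).symm, rfl⟩)
    fun p hp q hq _ => single_mul_single_of_ne _ _ _ _ (hne p hp q hq) _

theorem isProdOfAtMost_one_add_single_vecMulVec {c : Fin n} {w : Fin n → ZMod 2} (hw : w c = 0) :
    IsProdOfAtMost IsTransvection (hammingNorm w) (1 + vecMulVec (Pi.single c 1) w) := by
  refine (isProdOfAtMost_hammingNorm_mul_one_add_vecMulVec fun i => ?_).mono
    (mul_le_of_le_one_left (Nat.zero_le _) (hammingNorm_single_le_one c 1))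
  by_cases hi : i = c
  · exact .inr (hi ▸ hw)
  · exact .inl (Pi.single_eq_of_ne hi 1)

theorem isProdOfAtMost_one_add_vecMulVec_single {c : Fin n} {u : Fin n → ZMod 2} (hu : u c = 0) :
    IsProdOfAtMost IsTransvection (hammingNorm u) (1 + vecMulVec u (Pi.single c 1)) := by
  refine (isProdOfAtMost_hammingNorm_mul_one_add_vecMulVec fun i => ?_).mono
    (mul_le_of_le_one_right (Nat.zero_le _) (hammingNorm_single_le_one c 1))
  by_cases hi : i = c
  · exact .inl (hi ▸ hu)
  · exact .inr (Pi.single_eq_of_ne hi 1)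

theorem isProdOfAtMost_one_add_vecMulVec {u v : Fin n → ZMod 2} (huv : ∀ i, u i = 0 ∨ v i = 0) :
    IsProdOfAtMost IsTransvection (2 * hammingNorm v + hammingNorm u) (1 + vecMulVec u v) := by
  rcases eq_or_ne v 0 with rfl | hv
  · simpa using IsProdOfAtMost.one.mono (Nat.zero_le (hammingNorm u))
  obtain ⟨c, hc : v c ≠ 0⟩ := Function.ne_iff.1 hv
  let w := Function.update v c 0
  have hvw : Pi.single c 1 + w = v := by
    rw [← eq_one_of_ne_zero_zmod_two hc, single_add_update_zero]
  have hwc : w c = 0 := Function.update_self c 0 v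
  have huc : u c = 0 := (huv c).resolve_right hc
  have hw_of_v {i : Fin n} (hi : v i = 0) : w i = 0 := by
    simp [w, Function.update_apply, hi]
  have hwu : w ⬝ᵥ u = 0 := sum_eq_zero fun i _ => mul_eq_zero.2 ((huv i).symm.imp_left hw_of_v)
  have hwv : hammingNorm w ≤ hammingNorm v :=
    hammingNorm_le_card_of_forall_notMem fun i hi => hw_of_v (by simpa using hi)
  have hF := isProdOfAtMost_one_add_single_vecMulVec hwc
  rw [← hvw, ← one_add_vecMulVec_conj hwc hwu, hvw]
  exact ((hF.mul (isProdOfAtMost_one_add_vecMulVec_single huc)).mul hF).mono (by omega)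

theorem isProdOfAtMost_one_add_of_support {D : Finset (Fin n)}
    {N : Matrix (Fin n) (Fin n) (ZMod 2)} (hN : ∀ i j, N i j ≠ 0 → i ∉ D ∧ j ∈ D) :
    IsProdOfAtMost IsTransvection (2 * #D * 2 ^ #D + n) (1 + N) := by
  let rows := univ.image N.row
  let ind : (Fin n → ZMod 2) → Fin n → ZMod 2 := fun p i => if N.row i = p then 1 else 0
  have hcols : ∀ i, ∀ j ∉ D, N.row i j = 0 := fun i j hj =>
    not_not.1 fun hij => hj (hN i j hij).2
  have hdisj : ∀ p, p ≠ 0 → ∀ q ∈ rows, ∀ i, ind p i = 0 ∨ q i = 0 := by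
    intro p hp q hq i
    obtain ⟨k, -, rfl⟩ := mem_image.1 hq
    by_cases hi : i ∈ D
    · have hrow : N.row i = 0 := funext fun j => not_not.1 fun hij => (hN i j hij).1 hi
      exact .inl (if_neg (hrow ▸ hp.symm))
    · exact .inr (hcols k i hi)
  have hpattern : ∀ p ∈ rows, IsProdOfAtMost IsTransvection (2 * #D + #{i | N.row i = p})
      (1 + vecMulVec (ind p) p) := by
    intro p hp
    rcases eq_or_ne p 0 with rfl | hp0
    · simpa using IsProdOfAtMost.one.mono (Nat.zero_le _)
    refine (isProdOfAtMost_one_add_vecMulVec (hdisj p hp0 p hp)).mono ?_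
    obtain ⟨k, -, rfl⟩ := mem_image.1 hp
    gcongr
    · exact hammingNorm_le_card_of_forall_notMem (hcols k)
    · simp [ind, hammingNorm]
  have hmul : (rows : Set (Fin n → ZMod 2)).Pairwise fun p q =>
      vecMulVec (ind p) p * vecMulVec (ind q) q = 0 := by
    intro p hp q _ _
    rcases eq_or_ne q 0 with rfl | hq0
    · simp
    have hpq : p ⬝ᵥ ind q = 0 := sum_eq_zero fun i _ => mul_eq_zero.2 (hdisj q hq0 p hp i).symm
    rw [vecMulVec_mul_vecMulVec, hpq, zero_smul, vecMulVec_zero]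
  have hcount : ∑ p ∈ rows, (2 * #D + #{i | N.row i = p}) ≤ 2 * #D * 2 ^ #D + n := by
    simpa using sum_image_add_card_fiber_le (fun i (_ : i ∈ univ) => hcols i) (2 * #D)
  rw [eq_sum_vecMulVec_image_row N]
  exact (IsProdOfAtMost.one_add_sum hpattern hmul).mono hcount

end TransvectionCounts

/-- `B` agrees with the identity matrix on the rows in `S` and the columns in `T`.  Elimination
maintains it for `univ × s`, the columns already reduced, and for `D × D`, the pivots found so far
in the current section. -/
def EqOneOn {ι R : Type*} [DecidableEq ι] [Zero R] [One R] (S T : Finset ι)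
    (B : Matrix ι ι R) : Prop :=
  ∀ i ∈ S, ∀ j ∈ T, B i j = (1 : Matrix ι ι R) i j

section Elimination

variable {ι R : Type*} [DecidableEq ι] [CommRing R] {S T s D : Finset ι} {c r : ι}
  {B : Matrix ι ι R}

/-- The coefficients of the combination of rows of `B` that subtracts from row `r` the multiples
of the rows in `D` which clear its entries in the columns of `D`, when `B` is the identity on
`D × D`. -/
def residualRow (B : Matrix ι ι R) (D : Finset ι) (r : ι) : ι → R :=
  Pi.single r 1 - D.piecewise (B r) 0

theorem residualRow_apply_of_notMem {i : ι} (hi : i ∉ D) :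
    residualRow B D r i = (1 : Matrix ι ι R) r i := by
  simp [residualRow, hi, one_eq_pi_single]

variable [Fintype ι]

theorem EqOneOn.vecMul_apply (hB : EqOneOn S T B) {w : ι → R} (hw : ∀ i ∉ S, w i = 0) {j : ι}
    (hj : j ∈ T) : (w ᵥ* B) j = w j := by
  calc (w ᵥ* B) j = (w ᵥ* 1) j := sum_congr rfl fun i _ => by
        by_cases hi : i ∈ S
        · exact congrArg (w i * ·) (hB i hi j hj)
        · simp only [hw i hi, zero_mul]
    _ = w j := by rw [vecMul_one]

theorem EqOneOn.mulVec_eq_self (hs : EqOneOn univ s B) {w : ι → R} (hw : ∀ i ∉ s, w i = 0) :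
    B *ᵥ w = w := by
  calc B *ᵥ w = 1 *ᵥ w := funext fun i => sum_congr rfl fun j _ => by
        by_cases hj : j ∈ s
        · exact congrArg (· * w j) (hs i (mem_univ i) j hj)
        · simp only [hw j hj, mul_zero]
    _ = w := one_mulVec w

theorem EqOneOn.exists_mulVec_ne_zero (hs : EqOneOn univ s B) (hB : IsUnit B) (hc : c ∉ s)
    {v : ι → R} (hv : v c ≠ 0) : ∃ r ∉ s, (B *ᵥ v) r ≠ 0 := by
  by_contra! hzero
  have hfix : B *ᵥ v = v := mulVec_injective_of_isUnit hB (hs.mulVec_eq_self hzero)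
  exact hv (hfix ▸ hzero c hc)

theorem residualRow_vecMul_apply_eq_zero (hs : EqOneOn univ s B) (hD : EqOneOn D D B)
    (hsD : Disjoint s D) (hr : r ∉ s) {j : ι} (hj : j ∈ s ∪ D) :
    (residualRow B D r ᵥ* B) j = 0 := by
  rcases mem_union.1 hj with hjs | hjD
  · rw [hs.vecMul_apply (by simp) hjs,
      residualRow_apply_of_notMem (disjoint_left.1 hsD hjs),
      one_apply_ne (ne_of_mem_of_not_mem hjs hr).symm]
  · rw [residualRow, sub_vecMul, single_one_vecMul, Pi.sub_apply,
      hD.vecMul_apply (fun i hi => piecewise_eq_of_notMem D _ _ hi) hjD,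
      piecewise_eq_of_mem D _ _ hjD, row_apply, sub_self]

theorem exists_residualRow_vecMul_apply_ne_zero [Nontrivial R] (hs : EqOneOn univ s B)
    (hB : IsUnit B) (hcs : c ∉ s) (hcD : c ∉ D) :
    ∃ r ∉ s, (residualRow B D r ᵥ* B) c ≠ 0 := by
  let v : ι → R := Pi.single c 1 - D.piecewise (B.col c) 0
  have hv : v c ≠ 0 := by simp [v, hcD]
  have hBv (r : ι) : (B *ᵥ v) r = (residualRow B D r ᵥ* B) c := by
    have hpiece : B r ⬝ᵥ D.piecewise (B.col c) 0 = D.piecewise (B r) 0 ⬝ᵥ B.col c :=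
      sum_congr rfl fun l _ => by by_cases hl : l ∈ D <;> simp [hl]
    rw [residualRow, sub_vecMul, single_one_vecMul, mulVec_sub, mulVec_single_one]
    exact congrArg (B r c - ·) hpiece
  obtain ⟨r, hr, hne⟩ := hs.exists_mulVec_ne_zero hB hcs hv
  exact ⟨r, hr, hBv r ▸ hne⟩

theorem exists_single_add_vecMul_eq_one [DecidableEq R] (hs : EqOneOn univ s B)
    (hD : EqOneOn D D B) (hsD : Disjoint s D) (hcs : c ∉ s) (hcD : c ∉ D) (hrs : r ∉ s)
    (hrc : (residualRow B D r ᵥ* B) c = 1) :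
    ∃ w : ι → R, w c = 0 ∧ hammingNorm w ≤ #D + 1 ∧
      ∀ j ∈ insert c (s ∪ D), ((Pi.single c 1 + w) ᵥ* B) j = (1 : Matrix ι ι R) c j := by
  -- If the residual entry of row `c` in column `c` is not `1`, a multiple of row `r` corrects it.
  let z := 1 - (residualRow B D c ᵥ* B) c
  refine ⟨residualRow B D c - Pi.single c 1 + z • residualRow B D r, ?_, ?_, fun j hj => ?_⟩
  · rcases eq_or_ne r c with rfl | hne
    · simp [z, hrc, residualRow_apply_of_notMem hcD]
    · simp [residualRow_apply_of_notMem hcD, one_apply_ne hne]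
  · refine (hammingNorm_le_card_of_forall_notMem (D := insert r D) fun i hi => ?_).trans
      (card_insert_le r D)
    rw [mem_insert, not_or] at hi
    simp [residualRow, hi.1, hi.2]
  · have hcombine : Pi.single c 1 + (residualRow B D c - Pi.single c 1 + z • residualRow B D r) =
        residualRow B D c + z • residualRow B D r := by abel
    rw [hcombine, add_vecMul, smul_vecMul, Pi.add_apply, Pi.smul_apply, smul_eq_mul]
    rcases mem_insert.1 hj with rfl | hj
    · rw [hrc, one_apply_eq, mul_one, add_sub_cancel]
    · have hcsD : c ∉ s ∪ D := by simp [hcs, hcD]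
      rw [residualRow_vecMul_apply_eq_zero hs hD hsD hcs hj,
        residualRow_vecMul_apply_eq_zero hs hD hsD hrs hj, mul_zero, add_zero,
        one_apply_ne (ne_of_mem_of_not_mem hj hcsD).symm]

variable {n : ℕ} {s D : Finset (Fin n)} {c : Fin n} {B : Matrix (Fin n) (Fin n) (ZMod 2)}

theorem exists_eqOneOn_pivot_row (hs : EqOneOn univ s B) (hD : EqOneOn D D B) (hB : IsUnit B)
    (hsD : Disjoint s D) (hcs : c ∉ s) (hcD : c ∉ D) :
    ∃ G, IsProdOfAtMost IsTransvection (#D + 1) G ∧ EqOneOn univ s (G * B) ∧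
      EqOneOn D D (G * B) ∧ EqOneOn {c} (insert c D) (G * B) := by
  obtain ⟨r, hrs, hrc⟩ := exists_residualRow_vecMul_apply_ne_zero hs hB hcs hcD
  obtain ⟨w, hwc, hw, hrow⟩ := exists_single_add_vecMul_eq_one hs hD hsD hcs hcD hrs
    (eq_one_of_ne_zero_zmod_two hrc)
  let G := 1 + vecMulVec (Pi.single c 1) w
  have hother {i : Fin n} (hi : i ≠ c) (j : Fin n) : (G * B) i j = B i j := by
    simp [G, one_add_vecMulVec_mul_apply, hi]
  have hpivot {j : Fin n} (hj : j ∈ insert c (s ∪ D)) : (G * B) c j = (1 : Matrix _ _ _) c j := by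
    rw [← hrow j hj, add_vecMul, single_one_vecMul]
    simp [G, one_add_vecMulVec_mul_apply]
  refine ⟨G, (isProdOfAtMost_one_add_single_vecMulVec hwc).mono hw, ?_, ?_, ?_⟩
  · intro i hi j hj
    rcases eq_or_ne i c with rfl | hne
    · exact hpivot (by simp [hj])
    · rw [hother hne, hs i hi j hj]
  · intro i hi j hj
    rw [hother (ne_of_mem_of_not_mem hi hcD), hD i hi j hj]
  · intro i hi j hj
    rw [mem_singleton.1 hi]
    exact hpivot (insert_subset_insert c subset_union_right hj)

theorem exists_eqOneOn_pivot_col (hs : EqOneOn univ s B) (hD : EqOneOn D D B)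
    (hrow : EqOneOn {c} (insert c D) B) (hcs : c ∉ s) (hcD : c ∉ D) :
    ∃ G, IsProdOfAtMost IsTransvection #D G ∧ EqOneOn univ s (G * B) ∧
      EqOneOn (insert c D) (insert c D) (G * B) := by
  let u : Fin n → ZMod 2 := D.piecewise (B.col c) 0
  let G := 1 + vecMulVec u (Pi.single c 1)
  have huD {i : Fin n} (hi : i ∉ D) : u i = 0 := piecewise_eq_of_notMem D _ _ hi
  have hG (i j : Fin n) : (G * B) i j = B i j + u i * B c j := by
    rw [one_add_vecMulVec_mul_apply, single_one_vecMul, row_apply]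
  refine ⟨G, (isProdOfAtMost_one_add_vecMulVec_single (huD hcD)).mono
    (hammingNorm_le_card_of_forall_notMem fun i => huD), ?_, ?_⟩
  · intro i hi j hj
    rw [hG, hs c (mem_univ c) j hj, one_apply_ne (ne_of_mem_of_not_mem hj hcs).symm, mul_zero,
      add_zero, hs i hi j hj]
  · intro i hi j hj
    rw [hG, hrow c (mem_singleton_self c) j hj]
    rcases mem_insert.1 hi with rfl | hiD
    · rw [huD hcD, zero_mul, add_zero, hrow i (mem_singleton_self i) j hj]
    rcases mem_insert.1 hj with rfl | hjD
    · rw [one_apply_eq, mul_one, one_apply_ne (ne_of_mem_of_not_mem hiD hcD)]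
      simp [u, hiD, CharTwo.add_self_eq_zero]
    · rw [one_apply_ne (ne_of_mem_of_not_mem hjD hcD).symm, mul_zero, add_zero, hD i hiD j hjD]

theorem IsProdOfAtMost.isUnit_mul {t : ℕ} {G : Matrix (Fin n) (Fin n) (ZMod 2)}
    (hG : IsProdOfAtMost IsTransvection t G) (hB : IsUnit B) : IsUnit (G * B) :=
  (hG.isUnit fun _ => IsTransvection.isUnit).mul hB

theorem exists_eqOneOn_block (hs : EqOneOn univ s B) (hB : IsUnit B) (hsD : Disjoint s D) :
    ∃ G, IsProdOfAtMost IsTransvection (#D ^ 2) G ∧ EqOneOn univ s (G * B) ∧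
      EqOneOn D D (G * B) := by
  induction D using Finset.induction_on with
  | empty => exact ⟨1, .one, by rwa [one_mul], by simp [EqOneOn]⟩
  | insert c D hcD ih =>
    obtain ⟨hcs, hsD'⟩ := disjoint_insert_right.1 hsD
    obtain ⟨F, hF, hFs, hFD⟩ := ih hsD'
    obtain ⟨G, hG, hGs, hGD, hGc⟩ :=
      exists_eqOneOn_pivot_row hFs hFD (hF.isUnit_mul hB) hsD' hcs hcD
    obtain ⟨H, hH, hHs, hHD⟩ := exists_eqOneOn_pivot_col hGs hGD hGc hcs hcD
    refine ⟨H * G * F, ((hH.mul hG).mul hF).mono ?_, ?_, ?_⟩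
    · rw [card_insert_of_notMem hcD]
      linarith
    · simpa only [mul_assoc] using hHs
    · simpa only [mul_assoc] using hHD

theorem exists_eqOneOn_union (hs : EqOneOn univ s B) (hD : EqOneOn D D B) (hsD : Disjoint s D) :
    ∃ G, IsProdOfAtMost IsTransvection (2 * #D * 2 ^ #D + n) G ∧
      EqOneOn univ (s ∪ D) (G * B) := by
  let N : Matrix (Fin n) (Fin n) (ZMod 2) := fun i => if i ∈ D then 0 else D.piecewise (B i) 0
  have hN : ∀ i j, N i j ≠ 0 → i ∉ D ∧ j ∈ D := by
    intro i j hij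
    by_contra hcon
    by_cases hi : i ∈ D <;> simp_all [N]
  have hGB (i j : Fin n) : ((1 + N) * B) i j = B i j + (N i ᵥ* B) j := by
    rw [add_mul, one_mul]; rfl
  refine ⟨1 + N, isProdOfAtMost_one_add_of_support hN, fun i hi j hj => ?_⟩
  rw [hGB]
  by_cases hiD : i ∈ D
  · have hNi : N i = 0 := if_pos hiD
    rw [hNi, zero_vecMul, Pi.zero_apply, add_zero]
    exact (mem_union.1 hj).elim (hs i hi j) (hD i hiD j)
  have hNi : N i = D.piecewise (B i) 0 := if_neg hiD
  rw [hNi]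
  rcases mem_union.1 hj with hjs | hjD
  · rw [hs.vecMul_apply (by simp) hjs, piecewise_eq_of_notMem D _ _ (disjoint_left.1 hsD hjs),
      Pi.zero_apply, add_zero, hs i hi j hjs]
  · rw [hD.vecMul_apply (fun l hl => piecewise_eq_of_notMem D _ _ hl) hjD,
      piecewise_eq_of_mem D _ _ hjD, CharTwo.add_self_eq_zero,
      one_apply_ne (ne_of_mem_of_not_mem hjD hiD).symm]

theorem exists_eqOneOn_of_card_le (m : ℕ) (hB : IsUnit B) {k : ℕ} (U : Finset (Fin n))
    (hU : #U ≤ k * m) :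
    ∃ G, IsProdOfAtMost IsTransvection (k * (m ^ 2 + 2 * m * 2 ^ m + n)) G ∧
      EqOneOn univ U (G * B) := by
  induction k generalizing U with
  | zero =>
    have hU0 : U = ∅ := by simpa using hU
    exact ⟨1, by simpa using .one, by simp [EqOneOn, hU0]⟩
  | succ k ih =>
    obtain ⟨D, hDU, hDcard⟩ := exists_subset_card_eq (min_le_right m #U)
    have hDm : #D ≤ m := hDcard ▸ min_le_left m #U
    have hrest : #(U \ D) ≤ k * m := by
      rw [card_sdiff_of_subset hDU, hDcard]
      rw [add_mul, one_mul] at hU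
      omega
    obtain ⟨F, hF, hFs⟩ := ih (U \ D) hrest
    obtain ⟨G, hG, hGs, hGD⟩ := exists_eqOneOn_block hFs (hF.isUnit_mul hB) sdiff_disjoint
    obtain ⟨H, hH, hHU⟩ := exists_eqOneOn_union hGs hGD sdiff_disjoint
    refine ⟨H * G * F, ((hH.mul hG).mul hF).mono ?_, ?_⟩
    · calc 2 * #D * 2 ^ #D + n + #D ^ 2 + k * (m ^ 2 + 2 * m * 2 ^ m + n)
          ≤ 2 * m * 2 ^ m + n + m ^ 2 + k * (m ^ 2 + 2 * m * 2 ^ m + n) := by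
            gcongr
            exact one_le_two
        _ = (k + 1) * (m ^ 2 + 2 * m * 2 ^ m + n) := by ring
    · simpa only [mul_assoc, sdiff_union_of_subset hDU] using hHU

end Elimination

theorem natCast_ceilDiv_mul_le (n : ℕ) {m : ℕ} (hm : 1 ≤ m) :
    ((n ⌈/⌉ m * (m ^ 2 + 2 * m * 2 ^ m + n) : ℕ) : ℝ) ≤ (n : ℝ) ^ 2 / m + 3 * n + m
      + 2 * n * 2 ^ m + 2 * n * m + 2 * m * 2 ^ m + 2 * m ^ 2 := by
  have hm0 : (0 : ℝ) < m := by exact_mod_cast hm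
  have hceil : ((n ⌈/⌉ m : ℕ) : ℝ) ≤ n / m + 1 := by
    rw [Nat.ceilDiv_eq_add_pred_div, div_add_one hm0.ne']
    refine Nat.cast_div_le.trans ?_
    gcongr
    exact_mod_cast Nat.sub_le (n + m) 1
  calc ((n ⌈/⌉ m * (m ^ 2 + 2 * m * 2 ^ m + n) : ℕ) : ℝ)
      = (n ⌈/⌉ m : ℕ) * ((m : ℝ) ^ 2 + 2 * m * 2 ^ m + n) := by push_cast; ring
    _ ≤ (n / m + 1) * ((m : ℝ) ^ 2 + 2 * m * 2 ^ m + n) := by gcongr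
    _ = (n : ℝ) ^ 2 / m + n + 2 * n * 2 ^ m + n * m + 2 * m * 2 ^ m + m ^ 2 := by
      field_simp
      ring
    _ ≤ _ := by nlinarith [mul_nonneg (Nat.cast_nonneg n : (0 : ℝ) ≤ n) hm0.le, sq_nonneg (m : ℝ)]

theorem algorithm_one_gate_count_general (n m : ℕ) (hm : 1 ≤ m)
    (A : Matrix (Fin n) (Fin n) (ZMod 2)) (hA : IsUnit A) :
    IsProdOfAtMost IsTransvection (n ⌈/⌉ m * (m ^ 2 + 2 * m * 2 ^ m + n)) A := by
  have hcard : #(univ : Finset (Fin n)) ≤ n ⌈/⌉ m * m := by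
    simpa [mul_comm] using le_smul_ceilDiv (a := m) (b := n) hm
  obtain ⟨G, hG, hGA⟩ := exists_eqOneOn_of_card_le m (isUnit_nonsing_inv_iff.2 hA) univ hcard
  have hinv : G * A⁻¹ = 1 := Matrix.ext fun i j => hGA i (mem_univ i) j (mem_univ j)
  have hG_eq : G = A := by
    rw [← nonsing_inv_nonsing_inv A ((isUnit_iff_isUnit_det A).1 hA), inv_eq_left_inv hinv]
  exact hG_eq ▸ hG

/-- Upper bound from Algorithm 1 with section size `m`: every invertible
`n × n` matrix over `𝔽₂` is a product of at most
`n²/m + 3n + m + 2n·2^m + 2nm + 2m·2^m + 2m²` transvections. -/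
theorem algorithm_one_gate_count (n m : ℕ) (hm : 1 ≤ m) (hmn : m ≤ n)
    (A : Matrix (Fin n) (Fin n) (ZMod 2)) (hA : IsUnit A) :
    ∃ L : List (Matrix (Fin n) (Fin n) (ZMod 2)),
      (∀ B ∈ L, IsTransvection B) ∧ L.prod = A ∧
      (L.length : ℝ) ≤ (n : ℝ) ^ 2 / m + 3 * n + m + 2 * n * 2 ^ m
        + 2 * n * m + 2 * m * 2 ^ m + 2 * m ^ 2 := by
  obtain ⟨L, hL, hprod, hlen⟩ := algorithm_one_gate_count_general n m hm A hA
  exact ⟨L, hL, hprod, (Nat.cast_le.2 hlen).trans (natCast_ceilDiv_mul_le n hm)⟩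
end

section
/- There exists a constant C > 0 such that for every n ≥ 2, every invertible n×n matrix over 𝔽₂ can be written as a product of at most C · n² / log₂ n transvections. -/
/-!
Induction on the size shows that a matrix of determinant one over a field is a product of four
unitriangular matrices, alternately lower and upper, so it suffices to treat an upper unitriangular
matrix `1 + N` over the field with `q` elements. Since `(1 + X) * (1 + Y) = 1 + X + Y` when
`X * Y = 0`, the matrix `1 + N` is the product of the matrices `1 + X`, where `X` runs over the
sections of `m` consecutive columns of `N`. In one section, the square block on the diagonal
costs at most `m ^ 2` transvections. The remaining rows take at most `q ^ m` values, and all rows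
with the same value `v` are handled by a single rank-one update `1 + u vᵀ`, which is a conjugate of
an update of one column and so costs `2 * m` more than the number of rows concerned. The total
`(n / m + 1) * (m ^ 2 + n + 2 * m * q ^ m)` is of order `n ^ 2 / log n` for `m ≈ ½ log_q n`.
-/

open Matrix Finset

theorem dotProduct_eq_zero_of_disjoint {ι R : Type*} [Fintype ι] [NonUnitalNonAssocSemiring R]
    {I J : Finset ι} {u v : ι → R} (hIJ : Disjoint I J)
    (hu : ∀ i ∉ I, u i = 0) (hv : ∀ j ∉ J, v j = 0) : u ⬝ᵥ v = 0 := by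
  refine sum_eq_zero fun i _ => ?_
  by_cases hi : i ∈ I
  · rw [hv i (disjoint_left.1 hIJ hi), mul_zero]
  · rw [hu i hi, zero_mul]

theorem card_le_pow_of_forall_notMem_eq_zero {ι F : Type*} [Fintype F] [Zero F]
    {S : Finset ι} {W : Finset (ι → F)}
    (hW : ∀ p ∈ W, ∀ j ∉ S, p j = 0) : #W ≤ Fintype.card F ^ #S := by
  classical
  have hinj : Set.InjOn (fun (p : ι → F) (j : S) => p j) W := by
    intro p hp q hq hpq
    funext j
    by_cases hj : j ∈ S
    · exact congrFun hpq ⟨j, hj⟩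
    · rw [hW p hp j hj, hW q hq j hj]
  simpa using card_le_card_of_injOn (t := univ) _ (by simp) hinj

theorem conj_one_add_vecMulVec {ι R : Type*} [Fintype ι] [DecidableEq ι] [CommRing R]
    {e u w : ι → R} (hee : e ⬝ᵥ e = 1) (hwe : w ⬝ᵥ e = 0) (hwu : w ⬝ᵥ u = 0) :
    (1 + vecMulVec e (-w)) * (1 + vecMulVec u e) * (1 + vecMulVec e w) =
      1 + vecMulVec u (e + w) := by
  simp only [add_mul, mul_add, one_mul, mul_one, vecMulVec_mul_vecMulVec, neg_dotProduct, hee, hwe,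
    hwu, neg_zero, zero_smul, one_smul, vecMulVec_zero, vecMulVec_add, add_zero]
  rw [vecMulVec_neg]
  abel

/-- `M` is a product of at most `k` elementary matrices `1 + c Eᵢⱼ` with `i ≠ j`, i.e. its word
length in these generators is at most `k`. The coefficient `c` may be any element of `R`,
including `0`. -/
def TransvectionLengthLE {ι R : Type*} [Fintype ι] [DecidableEq ι] [CommRing R]
    (M : Matrix ι ι R) (k : ℕ) : Prop :=
  ∃ L : List (TransvectionStruct ι R),
    (L.map TransvectionStruct.toMatrix).prod = M ∧ L.length ≤ k

namespace TransvectionLengthLE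

variable {ι κ R F : Type*} [Fintype ι] [DecidableEq ι] [CommRing R] [Field F]
  {M N X Y : Matrix ι ι R} {k l : ℕ}

theorem one : TransvectionLengthLE (1 : Matrix ι ι R) 0 :=
  ⟨[], by simp, by simp⟩

theorem mono (hM : TransvectionLengthLE M k) (hkl : k ≤ l) : TransvectionLengthLE M l :=
  let ⟨L, hL, hlen⟩ := hM
  ⟨L, hL, hlen.trans hkl⟩

theorem mul (hM : TransvectionLengthLE M k) (hN : TransvectionLengthLE N l) :
    TransvectionLengthLE (M * N) (k + l) := by
  obtain ⟨L, rfl, hL⟩ := hM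
  obtain ⟨L', rfl, hL'⟩ := hN
  exact ⟨L ++ L', by simp, by simpa using add_le_add hL hL'⟩

theorem one_add_single {i j : ι} (hij : i ≠ j) (c : R) :
    TransvectionLengthLE (1 + single i j c) 1 :=
  ⟨[⟨i, j, hij, c⟩], by simp [transvection], by simp⟩

theorem transpose (hM : TransvectionLengthLE M k) : TransvectionLengthLE Mᵀ k := by
  obtain ⟨L, rfl, hL⟩ := hM
  refine mono ?_ hL
  clear hL
  induction L with
  | nil => simpa using one
  | cons t L ih =>
    have ht : TransvectionLengthLE t.toMatrixᵀ 1 := by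
      simpa [TransvectionStruct.toMatrix, transvection] using one_add_single t.hij.symm t.c
    simpa using ih.mul ht

theorem one_add_add_of_mul_eq_zero (hXY : X * Y = 0) (hX : TransvectionLengthLE (1 + X) k)
    (hY : TransvectionLengthLE (1 + Y) l) : TransvectionLengthLE (1 + (X + Y)) (k + l) := by
  have hprod : (1 + X) * (1 + Y) = 1 + (X + Y) := by
    rw [add_mul, one_mul, mul_add, mul_one, hXY, add_zero, add_assoc, add_comm Y]
  exact hprod ▸ hX.mul hY

theorem one_add_sum_of_lt [LinearOrder κ] {s : Finset κ} {X : κ → Matrix ι ι R} {k : κ → ℕ}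
    (hmul : ∀ a ∈ s, ∀ b ∈ s, b < a → X a * X b = 0)
    (hX : ∀ a ∈ s, TransvectionLengthLE (1 + X a) (k a)) :
    TransvectionLengthLE (1 + ∑ a ∈ s, X a) (∑ a ∈ s, k a) := by
  induction s using Finset.induction_on_max with
  | empty => simpa using one
  | insert a s hmax ih =>
    have ha : a ∉ s := fun h => (hmax a h).false
    rw [sum_insert ha, sum_insert ha]
    refine one_add_add_of_mul_eq_zero ?_ (hX a (mem_insert_self a s)) (ih ?_ ?_)
    · rw [Matrix.mul_sum]
      exact sum_eq_zero fun b hb =>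
        hmul a (mem_insert_self a s) b (mem_insert_of_mem hb) (hmax b hb)
    · exact fun b hb c hc => hmul b (mem_insert_of_mem hb) c (mem_insert_of_mem hc)
    · exact fun b hb => hX b (mem_insert_of_mem hb)

theorem one_add_sum {s : Finset κ} {X : κ → Matrix ι ι R} {k : κ → ℕ}
    (hmul : ∀ a ∈ s, ∀ b ∈ s, a ≠ b → X a * X b = 0)
    (hX : ∀ a ∈ s, TransvectionLengthLE (1 + X a) (k a)) :
    TransvectionLengthLE (1 + ∑ a ∈ s, X a) (∑ a ∈ s, k a) := by
  classical
  let : LinearOrder κ := linearOrderOfSTO WellOrderingRel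
  exact one_add_sum_of_lt (fun a ha b hb hba => hmul a ha b hb hba.ne') hX

theorem one_add_vecMulVec_single {s : ι} {I : Finset ι} {u : ι → R} (hs : s ∉ I)
    (hu : ∀ i ∉ I, u i = 0) :
    TransvectionLengthLE (1 + vecMulVec u (Pi.single s 1)) #I := by
  have hdecomp : vecMulVec u (Pi.single s 1) = ∑ i ∈ I, single i s (u i) := by
    ext i j
    simp +contextual [Matrix.sum_apply, single_apply, vecMulVec_apply, Pi.single_apply, ite_and,
      hu, eq_comm]
  rw [hdecomp, card_eq_sum_ones]
  refine one_add_sum (fun i _ j hj _ => ?_) fun i hi => ?_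
  · exact single_mul_single_of_ne _ _ _ _ (ne_of_mem_of_not_mem hj hs).symm _
  · exact one_add_single (ne_of_mem_of_not_mem hi hs) _

theorem one_add_single_vecMulVec {s : ι} {J : Finset ι} {v : ι → R} (hs : s ∉ J)
    (hv : ∀ j ∉ J, v j = 0) :
    TransvectionLengthLE (1 + vecMulVec (Pi.single s 1) v) #J := by
  simpa [transpose_vecMulVec] using (one_add_vecMulVec_single hs hv).transpose

theorem one_add_vecMulVec {I J : Finset ι} {u v : ι → F} (hIJ : Disjoint I J)
    (hu : ∀ i ∉ I, u i = 0) (hv : ∀ j ∉ J, v j = 0) :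
    TransvectionLengthLE (1 + vecMulVec u v) (#I + 2 * #J) := by
  obtain rfl | hv0 := eq_or_ne v 0
  · simpa using one.mono (Nat.zero_le _)
  obtain ⟨s, hs⟩ : ∃ s, v s ≠ 0 := Function.ne_iff.1 hv0
  have hsJ : s ∈ J := not_imp_comm.1 (hv s) hs
  have hsI : s ∉ I := disjoint_right.1 hIJ hsJ
  set e : ι → F := Pi.single s 1 with he
  set w : ι → F := (v s)⁻¹ • v - e with hw
  have hws : w s = 0 := by simp [hw, he, hs]
  have hwJ : ∀ j ∉ J.erase s, w j = 0 := by
    intro j hj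
    obtain rfl | hjs := eq_or_ne j s
    · exact hws
    · simp [hw, he, hjs, hv j fun hjJ => hj (mem_erase.2 ⟨hjs, hjJ⟩)]
  have hwu : w ⬝ᵥ u = 0 :=
    dotProduct_eq_zero_of_disjoint (hIJ.symm.mono_left (erase_subset s J)) hwJ hu
  have hconj : vecMulVec (v s • u) (e + w) = vecMulVec u v := by
    rw [hw, add_sub_cancel, smul_vecMulVec, vecMulVec_smul, smul_inv_smul₀ hs]
  have hcol : TransvectionLengthLE (1 + vecMulVec (v s • u) e) #I :=
    one_add_vecMulVec_single hsI fun i hi => by simp [hu i hi]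
  have hrow := one_add_single_vecMulVec (notMem_erase s J) hwJ
  have hrow_neg := one_add_single_vecMulVec (v := -w) (notMem_erase s J) fun j hj => by
    simp [hwJ j hj]
  rw [← hconj, ← conj_one_add_vecMulVec (by simp [he]) (by simp [he, hws])
    (by rw [dotProduct_smul, hwu, smul_zero])]
  refine ((hrow_neg.mul hcol).mul hrow).mono ?_
  have := card_erase_le (s := J) (a := s)
  omega

theorem one_add_of_offDiagonal_block [Fintype F] {S : Finset ι} {V : Matrix ι ι F}
    (hrow : ∀ i ∈ S, ∀ j, V i j = 0) (hcol : ∀ i, ∀ j ∉ S, V i j = 0) :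
    TransvectionLengthLE (1 + V) (Fintype.card ι + Fintype.card F ^ #S * (2 * #S)) := by
  have := Classical.decEq F
  -- Equal rows of `V` are treated together: there are at most `|F| ^ #S` distinct ones.
  let W : Finset (ι → F) := Sᶜ.image V.row
  let I : (ι → F) → Finset ι := fun p => {i ∈ Sᶜ | V.row i = p}
  let u : (ι → F) → ι → F := fun p i => if i ∈ I p then 1 else 0
  have hdisj : ∀ p, Disjoint (I p) S := fun p =>
    disjoint_compl_left.mono_left (filter_subset _ _)
  have hu : ∀ p, ∀ i ∉ I p, u p i = 0 := fun p i hi => if_neg hi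
  have hW : ∀ p ∈ W, ∀ j ∉ S, p j = 0 := by
    intro p hp j hj
    obtain ⟨i, -, rfl⟩ := mem_image.1 hp
    exact hcol i j hj
  have hdecomp : V = ∑ p ∈ W, vecMulVec (u p) p := by
    ext i j
    by_cases hi : i ∈ S
    · simp [Matrix.sum_apply, vecMulVec_apply, u, I, hi, hrow i hi]
    · have hiW : V.row i ∈ W := mem_image_of_mem V.row (mem_compl.2 hi)
      simp [Matrix.sum_apply, vecMulVec_apply, u, I, hi, hiW]
  have hcard : #Sᶜ = ∑ p ∈ W, #(I p) := card_eq_sum_card_image V.row Sᶜ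
  have hlen := one_add_sum (s := W) (X := fun p => vecMulVec (u p) p)
    (fun p hp q _ _ => by
      rw [vecMulVec_mul_vecMulVec,
        dotProduct_eq_zero_of_disjoint (hdisj q).symm (hW p hp) (hu q), zero_smul, vecMulVec_zero])
    (fun p hp => one_add_vecMulVec (hdisj p) (hu p) (hW p hp))
  rw [← hdecomp] at hlen
  refine hlen.mono ?_
  calc ∑ p ∈ W, (#(I p) + 2 * #S)
      = #Sᶜ + #W * (2 * #S) := by
        rw [sum_add_distrib, sum_const, smul_eq_mul, hcard]
    _ ≤ Fintype.card ι + Fintype.card F ^ #S * (2 * #S) := by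
        gcongr
        · exact card_le_univ _
        · exact card_le_pow_of_forall_notMem_eq_zero hW

end TransvectionLengthLE

/-- Upper triangular matrices with unit diagonal. A lower unitriangular `L` is expressed as
`IsUpperUnitriangular Lᵀ`. -/
def IsUpperUnitriangular {ι R : Type*} [LT ι] [Zero R] [One R] (M : Matrix ι ι R) : Prop :=
  M.IsUpperTriangular ∧ ∀ i, M i i = 1

namespace TransvectionLengthLE

variable {ι κ R F : Type*} [Fintype ι] [LinearOrder ι] [CommRing R] [Field F] [Fintype F]

theorem one_add_of_strictUpper_block {S : Finset ι} {N : Matrix ι ι R}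
    (hN : ∀ i j, j ≤ i → N i j = 0) (hrow : ∀ i ∉ S, ∀ j, N i j = 0)
    (hcol : ∀ i, ∀ j ∉ S, N i j = 0) : TransvectionLengthLE (1 + N) (#S * #S) := by
  have hdecomp : N = ∑ j ∈ S, vecMulVec (N.col j) (Pi.single j 1) := by
    ext i j
    by_cases hj : j ∈ S <;>
      simp [Matrix.sum_apply, vecMulVec_apply, Pi.single_apply, hj, hcol i j]
  rw [hdecomp, ← smul_eq_mul, ← sum_const]
  refine one_add_sum_of_lt (fun a _ b _ hba => ?_) fun j _ => ?_
  · simp [vecMulVec_mul_vecMulVec, hN a b hba.le]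
  · refine (one_add_vecMulVec_single (notMem_erase j S) fun i hi => ?_).mono card_erase_le
    obtain rfl | hij := eq_or_ne i j
    · exact hN i i le_rfl
    · exact hrow i (fun hiS => hi (mem_erase.2 ⟨hij, hiS⟩)) j

theorem one_add_of_strictUpper_cols {S : Finset ι} {N : Matrix ι ι F}
    (hN : ∀ i j, j ≤ i → N i j = 0) (hcol : ∀ i, ∀ j ∉ S, N i j = 0) :
    TransvectionLengthLE (1 + N)
      (#S * #S + (Fintype.card ι + Fintype.card F ^ #S * (2 * #S))) := by
  let W : Matrix ι ι F := of fun i j => if i ∈ S then N i j else 0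
  let V : Matrix ι ι F := of fun i j => if i ∈ S then 0 else N i j
  have hdecomp : N = W + V := by
    ext i j
    by_cases hi : i ∈ S <;> simp [W, V, hi]
  have hWV : W * V = 0 := by
    ext i j
    rw [mul_apply, Matrix.zero_apply]
    refine sum_eq_zero fun k _ => ?_
    by_cases hk : k ∈ S <;> simp [W, V, hk, hcol i k]
  rw [hdecomp]
  refine one_add_add_of_mul_eq_zero hWV
    (one_add_of_strictUpper_block (fun i j hji => ?_) (fun i hi j => ?_) fun i j hj => ?_)
    (one_add_of_offDiagonal_block (fun i hi j => ?_) fun i j hj => ?_)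
  · simp [W, hN i j hji]
  · simp [W, hi]
  · simp [W, hcol i j hj]
  · simp [V, hi]
  · simp [V, hcol i j hj]

theorem of_isUpperUnitriangular [Fintype κ] [LinearOrder κ] {U : Matrix ι ι F}
    (hU : IsUpperUnitriangular U) {f : ι → κ} (hf : Monotone f) {m : ℕ}
    (hm : ∀ t, #{j | f j = t} ≤ m) :
    TransvectionLengthLE U
      (Fintype.card κ * (m * m + (Fintype.card ι + Fintype.card F ^ m * (2 * m)))) := by
  have hN : ∀ i j, j ≤ i → (U - 1) i j = 0 := by
    intro i j hji
    obtain rfl | hlt := hji.eq_or_lt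
    · simp [hU.2]
    · simp [hU.1 hlt, hlt.ne']
  let X : κ → Matrix ι ι F := fun t => of fun i j => if f j = t then (U - 1) i j else 0
  have hdecomp : U = 1 + ∑ t, X t := by
    ext i j
    simp [X, Matrix.sum_apply]
  rw [hdecomp, ← smul_eq_mul, ← card_univ, ← sum_const]
  refine one_add_sum_of_lt (fun a _ b _ hba => ?_) fun t _ => ?_
  · ext i j
    rw [mul_apply, Matrix.zero_apply]
    refine sum_eq_zero fun k _ => ?_
    by_cases hjk : j ≤ k
    · simp only [X, of_apply, hN k j hjk, ite_self, mul_zero]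
    · have hne : ¬(f k = a ∧ f j = b) := by
        rintro ⟨rfl, rfl⟩
        exact (hf (not_le.1 hjk).le).not_gt hba
      obtain hk | hj := not_and_or.1 hne
      · simp [X, hk]
      · simp [X, hj]
  · have hcols := one_add_of_strictUpper_cols (S := {j | f j = t}) (N := X t)
      (fun i j hji => by simp only [X, of_apply, hN i j hji, ite_self])
      (fun i j hj => if_neg (by simpa using hj))
    refine hcols.mono ?_
    have := Fintype.card_pos (α := F)
    gcongr <;> exact hm t

end TransvectionLengthLE

/-- The block matrix `[[a, r], [c, B]]` with row `r` and column `c` adjoined to `B`, indexed by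
`Fin` rather than a sum type so that one can induct on the size. -/
def bordered {R : Type*} {n : ℕ} (a : R) (r c : Fin n → R) (B : Matrix (Fin n) (Fin n) R) :
    Matrix (Fin (n + 1)) (Fin (n + 1)) R :=
  of (vecCons (vecCons a r) fun i => vecCons (c i) (B i))

section bordered

variable {R : Type*} {n : ℕ}

theorem eq_bordered (A : Matrix (Fin (n + 1)) (Fin (n + 1)) R) :
    A = bordered (A 0 0) (fun j => A 0 j.succ) (fun i => A i.succ 0)
      (A.submatrix Fin.succ Fin.succ) := by
  ext i j
  cases i using Fin.cases <;> cases j using Fin.cases <;> rfl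

theorem transpose_bordered (a : R) (r c : Fin n → R) (B : Matrix (Fin n) (Fin n) R) :
    (bordered a r c B)ᵀ = bordered a c r Bᵀ := by
  ext i j
  cases i using Fin.cases <;> cases j using Fin.cases <;> rfl

theorem IsUpperUnitriangular.bordered [Zero R] [One R] {U : Matrix (Fin n) (Fin n) R}
    (hU : IsUpperUnitriangular U) (r : Fin n → R) : IsUpperUnitriangular (bordered 1 r 0 U) := by
  refine ⟨fun i j => ?_, fun i => ?_⟩
  · cases i using Fin.cases <;> cases j using Fin.cases
    case succ.succ i j => exact fun hij => hU.1 (Fin.succ_lt_succ_iff.1 hij)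
    all_goals simp [_root_.bordered]
  · cases i using Fin.cases
    · rfl
    · exact hU.2 _

variable [CommRing R]

theorem bordered_mul_bordered (a a' : R) (r c r' c' : Fin n → R) (B B' : Matrix (Fin n) (Fin n) R) :
    bordered a r c B * bordered a' r' c' B' =
      bordered (a * a' + r ⬝ᵥ c') (a • r' + r ᵥ* B') (a' • c + B *ᵥ c')
        (vecMulVec c r' + B * B') := by
  ext i j
  cases i using Fin.cases <;> cases j using Fin.cases <;>
    simp [bordered, mul_apply, Fin.sum_univ_succ, vecMul, mulVec, dotProduct, vecMulVec_apply,
      mul_comm]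

theorem det_bordered_zero_col (r : Fin n → R) (B : Matrix (Fin n) (Fin n) R) :
    (bordered 1 r 0 B).det = B.det := by
  have hcorner : bordered 1 r 0 B 0 0 = 1 := rfl
  have hcol (i : Fin n) : bordered 1 r 0 B i.succ 0 = 0 := rfl
  have hminor : (bordered 1 r 0 B).submatrix Fin.succ Fin.succ = B := rfl
  simp [det_succ_column_zero, Fin.sum_univ_succ, hcorner, hcol, hminor]

theorem det_bordered_zero_row (c : Fin n → R) (B : Matrix (Fin n) (Fin n) R) :
    (bordered 1 0 c B).det = B.det := by
  rw [← det_transpose, transpose_bordered, det_bordered_zero_col, det_transpose]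

-- The two equations say that `(a, x)` is the first column of
-- `[[1, 0], [c, 1]] * [[1, r], [0, 1]] * [[1, 0], [y, 1]]`.
theorem exists_pivot_parameters {ι F : Type*} [Fintype ι] [Field F]
    {a : F} {x : ι → F} (hx : a = 0 → x ≠ 0) (ha : IsEmpty ι → a = 1) :
    ∃ c r y : ι → F, 1 + r ⬝ᵥ y = a ∧ a • c + y = x := by
  classical
  have exists_dotProduct (y : ι → F) (hy : y ≠ 0) : ∃ r : ι → F, 1 + r ⬝ᵥ y = a := by
    obtain ⟨i, hi : y i ≠ 0⟩ := Function.ne_iff.1 hy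
    exact ⟨Pi.single i ((a - 1) / y i), by simp [hi]⟩
  cases isEmpty_or_nonempty ι with
  | inl hι => exact ⟨0, 0, 0, by simp [ha hι], Subsingleton.elim _ _⟩
  | inr hι =>
    obtain ha0 | ha0 := eq_or_ne a 0
    · obtain ⟨r, hr⟩ := exists_dotProduct x (hx ha0)
      exact ⟨0, r, x, hr, by simp⟩
    · obtain ⟨r, hr⟩ := exists_dotProduct 1 one_ne_zero
      exact ⟨a⁻¹ • (x - 1), r, 1, hr, by simp [smul_inv_smul₀ ha0]⟩

theorem exists_eq_mul_bordered {F : Type*} [Field F] {A : Matrix (Fin (n + 1)) (Fin (n + 1)) F}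
    (hA : A.det = 1) :
    ∃ (c r y z : Fin n → F) (B : Matrix (Fin n) (Fin n) F), B.det = 1 ∧
      A = bordered 1 0 c 1 * (bordered 1 r 0 1 * (bordered 1 0 y 1 * bordered 1 z 0 B)) := by
  obtain ⟨a, q, x, D, rfl⟩ : ∃ a q x D, A = bordered a q x D := ⟨_, _, _, _, eq_bordered A⟩
  have hx : a = 0 → x ≠ 0 := by
    rintro rfl rfl
    refine zero_ne_one ((det_eq_zero_of_column_eq_zero 0 fun i => ?_).symm.trans hA)
    cases i using Fin.cases <;> rfl
  have ha : IsEmpty (Fin n) → a = 1 := by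
    intro hn
    cases n with
    | zero => simpa [bordered] using hA
    | succ n => exact hn.elim 0
  obtain ⟨c, r, y, rfl, rfl⟩ := exists_pivot_parameters hx ha
  let W := D - vecMulVec c q
  let z := q - r ᵥ* W
  have hfactor : bordered (1 + r ⬝ᵥ y) q ((1 + r ⬝ᵥ y) • c + y) D =
      bordered 1 0 c 1 * (bordered 1 r 0 1 *
        (bordered 1 0 y 1 * bordered 1 z 0 (W - vecMulVec y z))) := by
    simp [bordered_mul_bordered, z, W]
  refine ⟨c, r, y, z, W - vecMulVec y z, ?_, hfactor⟩
  simpa [hfactor, det_bordered_zero_col, det_bordered_zero_row] using hA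

end bordered

theorem exists_unitriangular_factorization {F : Type*} [Field F] {n : ℕ}
    {A : Matrix (Fin n) (Fin n) F} (hA : A.det = 1) :
    ∃ L U L' U' : Matrix (Fin n) (Fin n) F, IsUpperUnitriangular Lᵀ ∧ IsUpperUnitriangular U ∧
      IsUpperUnitriangular L'ᵀ ∧ IsUpperUnitriangular U' ∧ A = L * (U * (L' * U')) := by
  induction n with
  | zero =>
    have htriv (M : Matrix (Fin 0) (Fin 0) F) : IsUpperUnitriangular M :=
      ⟨fun i => i.elim0, fun i => i.elim0⟩
    exact ⟨1, 1, 1, 1, htriv _, htriv _, htriv _, htriv _, Subsingleton.elim _ _⟩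
  | succ n ih =>
    obtain ⟨c, r, y, z, B, hB, rfl⟩ := exists_eq_mul_bordered hA
    obtain ⟨L, U, L', U', hL, hU, hL', hU', rfl⟩ := ih hB
    have hunit : IsUnit (L * U).det := by
      rw [← mul_assoc, det_mul] at hB
      exact IsUnit.of_mul_eq_one _ hB
    -- Moving `L` and `U` past the row and column factors only changes `r` and `y` linearly.
    obtain ⟨y, rfl⟩ : ∃ y', (L * U) *ᵥ y' = y :=
      ⟨(L * U)⁻¹ *ᵥ y, by rw [mulVec_mulVec, mul_nonsing_inv _ hunit, one_mulVec]⟩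
    refine ⟨bordered 1 0 c L, bordered 1 (r ᵥ* (L * U)) 0 U, bordered 1 0 y L',
      bordered 1 z 0 U', ?_, hU.bordered _, ?_, hU'.bordered _, ?_⟩
    · rw [transpose_bordered]
      exact hL.bordered c
    · rw [transpose_bordered]
      exact hL'.bordered _
    · simp [bordered_mul_bordered, mul_assoc, mul_add, mul_vecMulVec, vecMul_add,
        dotProduct_mulVec, vecMul_vecMul, mulVec_mulVec]

/-- The number `m ≈ ½ log_q n` of columns cleared together, small enough that the `q ^ m` possible
rows of a section number at most `q √n`. -/
def sectionSize (q n : ℕ) : ℕ :=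
  Nat.log q n / 2 + 1

section sectionSize

variable {q n : ℕ}

theorem sectionSize_le_pow (hq : 1 < q) : sectionSize q n ≤ q ^ (Nat.log q n / 2) :=
  Nat.lt_pow_self hq

theorem pow_log_half_mul_self_le (hq : 1 < q) (hn : n ≠ 0) :
    q ^ (Nat.log q n / 2) * q ^ (Nat.log q n / 2) ≤ n := by
  rw [← pow_add]
  exact (Nat.pow_le_pow_right (by omega) (by omega)).trans (Nat.pow_log_le_self q hn)

theorem sectionSize_mul_self_le (hq : 1 < q) (hn : n ≠ 0) :
    sectionSize q n * sectionSize q n ≤ n :=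
  (Nat.mul_le_mul (sectionSize_le_pow hq) (sectionSize_le_pow hq)).trans
    (pow_log_half_mul_self_le hq hn)

theorem pow_sectionSize_mul_le (hq : 1 < q) (hn : n ≠ 0) :
    q ^ sectionSize q n * sectionSize q n ≤ q * n :=
  calc q ^ sectionSize q n * sectionSize q n
      ≤ q ^ sectionSize q n * q ^ (Nat.log q n / 2) := by
        gcongr
        exact sectionSize_le_pow hq
    _ = q * (q ^ (Nat.log q n / 2) * q ^ (Nat.log q n / 2)) := by rw [sectionSize]; ring
    _ ≤ q * n := by
        gcongr
        exact pow_log_half_mul_self_le hq hn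

theorem logb_le_two_mul_sectionSize (hq : 1 < q) (hn : n ≠ 0) :
    Real.logb q n ≤ 2 * sectionSize q n := by
  have hq' : (1 : ℝ) < q := by exact_mod_cast hq
  have hle : n ≤ q ^ (2 * sectionSize q n) :=
    (Nat.lt_pow_succ_log_self hq n).le.trans
      (Nat.pow_le_pow_right (by omega) (by rw [sectionSize]; omega))
  calc Real.logb q n ≤ Real.logb q ((q : ℝ) ^ (2 * sectionSize q n)) :=
        Real.logb_le_logb_of_le hq' (by positivity) (by exact_mod_cast hle)
    _ = 2 * sectionSize q n := by
        rw [Real.logb_pow, Real.logb_self_eq_one hq', mul_one, Nat.cast_mul, Nat.cast_two]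

theorem unitriangular_length_mul_sectionSize_le (hq : 1 < q) (hn : n ≠ 0) :
    (n / sectionSize q n + 1) * (sectionSize q n * sectionSize q n +
      (n + q ^ sectionSize q n * (2 * sectionSize q n))) * sectionSize q n ≤
      4 * (q + 1) * n ^ 2 := by
  have hsq := sectionSize_mul_self_le hq hn
  have hpow := pow_sectionSize_mul_le hq hn
  generalize sectionSize q n = m at *
  have hblocks : (n / m + 1) * m ≤ 2 * n := by
    have := Nat.div_mul_le_self n m
    have := Nat.le_mul_self m
    rw [add_mul, one_mul]
    omega
  have hsection : m * m + (n + q ^ m * (2 * m)) ≤ 2 * (q + 1) * n := by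
    rw [mul_left_comm]
    linarith
  calc (n / m + 1) * (m * m + (n + q ^ m * (2 * m))) * m
      = (n / m + 1) * m * (m * m + (n + q ^ m * (2 * m))) := by ring
    _ ≤ 2 * n * (2 * (q + 1) * n) := by gcongr
    _ = 4 * (q + 1) * n ^ 2 := by ring

end sectionSize

theorem card_filter_div_eq_le {n m : ℕ} (hm : 0 < m) (t : ℕ) :
    #{j : Fin n | (j : ℕ) / m = t} ≤ m := by
  have hinj : Set.InjOn (fun j : Fin n => (j : ℕ) % m)
      ({j : Fin n | (j : ℕ) / m = t} : Finset (Fin n)) := by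
    intro i hi j hj (hij : (i : ℕ) % m = j % m)
    have hdiv : (i : ℕ) / m = j / m := by simp_all
    rw [Fin.ext_iff, ← Nat.div_add_mod i m, ← Nat.div_add_mod j m, hdiv, hij]
  simpa using card_le_card_of_injOn (t := range m) (fun j : Fin n => (j : ℕ) % m)
    (fun j _ => mem_coe.2 (mem_range.2 (Nat.mod_lt j hm))) hinj

theorem TransvectionLengthLE.of_isUpperUnitriangular_fin {F : Type*} [Field F] [Fintype F]
    {n m : ℕ} (hm : 0 < m) {U : Matrix (Fin n) (Fin n) F} (hU : IsUpperUnitriangular U) :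
    TransvectionLengthLE U
      ((n / m + 1) * (m * m + (n + Fintype.card F ^ m * (2 * m)))) := by
  let f : Fin n → Fin (n / m + 1) := fun j =>
    ⟨j / m, Nat.lt_succ_of_le (Nat.div_le_div_right j.isLt.le)⟩
  have hf : Monotone f := fun i j hij => Nat.div_le_div_right hij
  simpa using of_isUpperUnitriangular hU hf fun t => by
    simpa [f, Fin.ext_iff] using card_filter_div_eq_le hm (t : ℕ)

theorem exists_list_isTransvection_prod_eq {n : ℕ}
    (L : List (TransvectionStruct (Fin n) (ZMod 2))) :
    ∃ L' : List (Matrix (Fin n) (Fin n) (ZMod 2)), (∀ B ∈ L', IsTransvection B) ∧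
      L'.prod = (L.map TransvectionStruct.toMatrix).prod ∧ L'.length ≤ L.length := by
  induction L with
  | nil => exact ⟨[], by simp⟩
  | cons t L ih =>
    obtain ⟨L', hL', hprod, hlen⟩ := ih
    obtain hc | hc : t.c = 0 ∨ t.c = 1 :=
      (by decide : ∀ c : ZMod 2, c = 0 ∨ c = 1) t.c
    · exact ⟨L', hL', by simp [TransvectionStruct.toMatrix, hc, hprod], hlen.trans (by simp)⟩
    · refine ⟨t.toMatrix :: L', List.forall_mem_cons.2 ⟨⟨t.i, t.j, t.hij, ?_⟩, hL'⟩, ?_, ?_⟩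
      · rw [TransvectionStruct.toMatrix, hc]
      · simp [hprod]
      · simpa using hlen

theorem det_eq_one_of_isUnit {ι : Type*} [Fintype ι] [DecidableEq ι]
    {A : Matrix ι ι (ZMod 2)} (hA : IsUnit A) : A.det = 1 :=
  Fin.eq_one_of_ne_zero _ ((isUnit_iff_isUnit_det A).1 hA).ne_zero

theorem exists_transvectionLengthLE_mul_sectionSize_le {F : Type*} [Field F] [Fintype F] {n : ℕ}
    (hn : n ≠ 0) {A : Matrix (Fin n) (Fin n) F} (hA : A.det = 1) :
    ∃ k, TransvectionLengthLE A k ∧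
      k * sectionSize (Fintype.card F) n ≤ 16 * (Fintype.card F + 1) * n ^ 2 := by
  obtain ⟨L, U, L', U', hL, hU, hL', hU', rfl⟩ := exists_unitriangular_factorization hA
  have hm : 0 < sectionSize (Fintype.card F) n := Nat.succ_pos _
  have hupper {V : Matrix (Fin n) (Fin n) F} (hV : IsUpperUnitriangular V) :=
    TransvectionLengthLE.of_isUpperUnitriangular_fin hm hV
  have hlower {V : Matrix (Fin n) (Fin n) F} (hV : IsUpperUnitriangular Vᵀ) :=
    (hupper hV).transpose
  refine ⟨_, (hlower hL).mul ((hupper hU).mul ((hlower hL').mul (hupper hU'))), ?_⟩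
  have := unitriangular_length_mul_sectionSize_le Fintype.one_lt_card (q := Fintype.card F) hn
  linarith

theorem exists_upper_bound_constant_general (F : Type*) [Field F] [Fintype F] :
    ∃ C : ℝ, 0 < C ∧ ∀ n : ℕ, 2 ≤ n →
      ∀ A : Matrix (Fin n) (Fin n) F, A.det = 1 →
        ∃ L : List (TransvectionStruct (Fin n) F),
          (L.map TransvectionStruct.toMatrix).prod = A ∧
          (L.length : ℝ) ≤ C * (n : ℝ) ^ 2 / Real.logb (Fintype.card F) n := by
  have hq : 1 < Fintype.card F := Fintype.one_lt_card
  refine ⟨32 * (Fintype.card F + 1), by positivity, fun n hn A hA => ?_⟩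
  obtain ⟨k, ⟨L, hprod, hlen⟩, hk⟩ :=
    exists_transvectionLengthLE_mul_sectionSize_le (by omega) hA
  refine ⟨L, hprod, ?_⟩
  have hlog_pos : 0 < Real.logb (Fintype.card F) n :=
    Real.logb_pos (by exact_mod_cast hq) (by exact_mod_cast hn)
  rw [le_div_iff₀ hlog_pos]
  calc (L.length : ℝ) * Real.logb (Fintype.card F) n
      ≤ k * (2 * sectionSize (Fintype.card F) n) := by
        gcongr
        exact logb_le_two_mul_sectionSize hq (by omega)
    _ = 2 * ((k * sectionSize (Fintype.card F) n : ℕ) : ℝ) := by push_cast; ring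
    _ ≤ 2 * ((16 * (Fintype.card F + 1) * n ^ 2 : ℕ) : ℝ) := by gcongr
    _ = 32 * (Fintype.card F + 1) * (n : ℝ) ^ 2 := by push_cast; ring

/-- Upper bound: there is a constant `C > 0` such that for every `n ≥ 2`, every
invertible `n × n` matrix over `𝔽₂` is a product of at most `C · n² / log₂ n`
transvections. -/
theorem exists_upper_bound_constant :
    ∃ C : ℝ, 0 < C ∧ ∀ n : ℕ, 2 ≤ n →
      ∀ A : Matrix (Fin n) (Fin n) (ZMod 2), IsUnit A →
        ∃ L : List (Matrix (Fin n) (Fin n) (ZMod 2)),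
          (∀ B ∈ L, IsTransvection B) ∧ L.prod = A ∧
          (L.length : ℝ) ≤ C * (n : ℝ) ^ 2 / Real.logb 2 n := by
  obtain ⟨C, hC, hbound⟩ := exists_upper_bound_constant_general (ZMod 2)
  refine ⟨C, hC, fun n hn A hA => ?_⟩
  obtain ⟨L, rfl, hlen⟩ := hbound n hn A (det_eq_one_of_isUnit hA)
  obtain ⟨L', hL', hprod, hlen'⟩ := exists_list_isTransvection_prod_eq L
  exact ⟨L', hL', hprod, (Nat.cast_le.2 hlen').trans (by simpa [ZMod.card] using hlen)⟩
end

section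
/- Let F be a finite field with q = |F| ≥ 2 elements. There exists a constant C > 0 (depending on F) such that for every n ≥ 2, every invertible n×n matrix over F can be written as a product of at most C · n² · (log q) / (log n) matrices each of which is either a transvection (a matrix equal to the identity except for a single nonzero off-diagonal entry) or an invertible diagonal matrix. -/
/-- `A` is an elementary matrix over the field `F`: either a transvection
(the identity with a single nonzero off-diagonal entry) or an invertible
diagonal matrix. -/
def IsElementary {n : ℕ} {F : Type*} [Field F]
    (A : Matrix (Fin n) (Fin n) F) : Prop :=
  (∃ (i j : Fin n) (c : F), i ≠ j ∧ c ≠ 0 ∧ A = Matrix.transvection i j c) ∨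
  (∃ d : Fin n → F, (∀ i, d i ≠ 0) ∧ A = Matrix.diagonal d)

/-!
Let `q = |F|` and let `k` be about `(log_q n) / 3`. Clearing `k` columns below an invertible
`k × k` block amounts to writing a block matrix `[1 0; Y 1]` with `Y` of width `k` as a product of
elementary matrices. The rows of `Y` take at most `q ^ k` values, and all rows equal to a given `v`
are handled together: a change of basis of `F ^ k`, which costs `O(k ^ 2)`, turns `v` into a
coordinate vector, after which each row costs a single transvection. So `Y` costs
`n + O(k ^ 2 q ^ k) = O(n)`, and block elimination performs `n / k` such steps.

When `n < q ^ 3` the quantity `n ^ 2 log q / log n` is at least `n ^ 2 / 3`, and ordinary Gaussian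
elimination suffices; this makes the constant independent of `q`.
-/

section

variable {K V W : Type*} [DivisionRing K] [AddCommGroup V] [Module K V] [FiniteDimensional K V]
  [AddCommGroup W] [Module K W]

-- `x` maps `q (ker p)` isomorphically onto a complement of `range p`.
theorem exists_ker_add_comp_eq_bot {p : V →ₗ[K] V} {q : V →ₗ[K] W}
    (hpq : Disjoint p.ker q.ker) : ∃ x : W →ₗ[K] V, (p + x ∘ₗ q).ker = ⊥ := by
  obtain ⟨C, hC⟩ := Submodule.exists_isCompl p.range
  have hfinrank : Module.finrank K p.ker = Module.finrank K C := by
    have := p.finrank_range_add_finrank_ker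
    have := Submodule.finrank_add_eq_of_isCompl hC
    lia
  let e := LinearEquiv.ofFinrankEq p.ker C hfinrank
  have hinj : (q ∘ₗ p.ker.subtype).ker = ⊥ := by
    rw [LinearMap.ker_comp, ← Submodule.disjoint_iff_comap_eq_bot]
    exact hpq
  obtain ⟨l, hl⟩ := LinearMap.exists_leftInverse_of_injective _ hinj
  refine ⟨C.subtype ∘ₗ e.toLinearMap ∘ₗ l, LinearMap.ker_eq_bot'.2 fun z hz => ?_⟩
  replace hz : p z + e (l (q z)) = 0 := hz
  have hpz : p z = 0 := by
    refine Submodule.disjoint_def.1 hC.disjoint (p z) ⟨z, rfl⟩ ?_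
    rw [eq_neg_of_add_eq_zero_left hz]
    exact C.neg_mem (e _).2
  have hlz : l (q z) = ⟨z, hpz⟩ := LinearMap.congr_fun hl ⟨z, hpz⟩
  have hez : e (l (q z)) = 0 := Subtype.ext (by simpa [hpz] using hz)
  rw [e.map_eq_zero_iff, hlz] at hez
  exact congrArg Subtype.val hez

end

section

open Matrix
open scoped Pointwise

variable {F : Type*} [Field F] {ι κ : Type*} [DecidableEq ι] [DecidableEq κ]

/-- Transvections (possibly trivial) and invertible diagonal matrices over an arbitrary index type.
As `1` belongs to this set, its `m`-th pointwise power consists of the products of *at most* `m`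
such matrices. -/
def elementaryMatrices (ι F : Type*) [DecidableEq ι] [Field F] : Set (Matrix ι ι F) :=
  Set.range TransvectionStruct.toMatrix ∪ diagonal '' {d | ∀ i, d i ≠ 0}

theorem one_mem_elementaryMatrices : 1 ∈ elementaryMatrices ι F :=
  .inr ⟨1, fun _ => one_ne_zero, diagonal_one⟩

theorem isElementary_iff_mem_elementaryMatrices {n : ℕ} {A : Matrix (Fin n) (Fin n) F} :
    IsElementary A ↔ A ∈ elementaryMatrices (Fin n) F := by
  constructor
  · rintro (⟨i, j, c, hij, -, rfl⟩ | ⟨d, hd, rfl⟩)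
    · exact .inl ⟨⟨i, j, hij, c⟩, rfl⟩
    · exact .inr ⟨d, hd, rfl⟩
  · rintro (⟨⟨i, j, hij, c⟩, rfl⟩ | ⟨d, hd, rfl⟩)
    · rcases eq_or_ne c 0 with rfl | hc
      · exact .inr ⟨1, fun _ => one_ne_zero, by simp⟩
      · exact .inl ⟨i, j, c, hij, hc, rfl⟩
    · exact .inr ⟨d, hd, rfl⟩

theorem transpose_mem_elementaryMatrices {A : Matrix ι ι F} (hA : A ∈ elementaryMatrices ι F) :
    Aᵀ ∈ elementaryMatrices ι F := by
  rcases hA with ⟨⟨i, j, hij, c⟩, rfl⟩ | ⟨d, hd, rfl⟩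
  · exact .inl ⟨⟨j, i, hij.symm, c⟩, by simp [transvection]⟩
  · exact .inr ⟨d, hd, (diagonal_transpose d).symm⟩

theorem fromBlocks_one_mem_elementaryMatrices {A : Matrix κ κ F}
    (hA : A ∈ elementaryMatrices κ F) :
    fromBlocks A 0 0 (1 : Matrix ι ι F) ∈ elementaryMatrices (κ ⊕ ι) F := by
  rcases hA with ⟨t, rfl⟩ | ⟨d, hd, rfl⟩
  · exact .inl ⟨t.sumInl ι, t.toMatrix_sumInl ι⟩
  · refine .inr ⟨Sum.elim d 1, ?_, ?_⟩
    · exact Sum.rec hd fun _ => one_ne_zero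
    · rw [← fromBlocks_diagonal, ← diagonal_one]
      rfl

/-- The block matrix `[1 0; Y 1]`, which adds combinations of the rows indexed by `κ`, with
coefficients `Y`, to the rows indexed by `ι`. -/
def lowerUnipotent (Y : Matrix ι κ F) : Matrix (κ ⊕ ι) (κ ⊕ ι) F :=
  fromBlocks 1 0 Y 1

/-- The block matrix `[1 X; 0 1]`, which adds combinations of the rows indexed by `ι`, with
coefficients `X`, to the rows indexed by `κ`. -/
def upperUnipotent (X : Matrix κ ι F) : Matrix (κ ⊕ ι) (κ ⊕ ι) F :=
  fromBlocks 1 X 0 1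

theorem transpose_lowerUnipotent (Y : Matrix ι κ F) : (lowerUnipotent Y)ᵀ = upperUnipotent Yᵀ := by
  simp [lowerUnipotent, upperUnipotent, fromBlocks_transpose]

theorem lowerUnipotent_single_mem (i : ι) (j : κ) (c : F) :
    lowerUnipotent (single i j c) ∈ elementaryMatrices (κ ⊕ ι) F := by
  refine .inl ⟨⟨.inr i, .inl j, Sum.inr_ne_inl, c⟩, ?_⟩
  ext (x | x) (y | y) <;> simp [lowerUnipotent, transvection, one_apply, single_apply]

variable [Fintype ι] [Fintype κ]

theorem reindexAlgEquiv_mem_elementaryMatrices (e : ι ≃ κ) {A : Matrix ι ι F}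
    (hA : A ∈ elementaryMatrices ι F) : reindexAlgEquiv F F e A ∈ elementaryMatrices κ F := by
  rcases hA with ⟨t, rfl⟩ | ⟨d, hd, rfl⟩
  · exact .inl ⟨t.reindexEquiv e, t.toMatrix_reindexEquiv e⟩
  · exact .inr ⟨d ∘ e.symm, fun _ => hd _, by simp⟩

theorem elementaryMatrices_pow_mono : Monotone (elementaryMatrices ι F ^ ·) :=
  Set.pow_right_monotone one_mem_elementaryMatrices

theorem map_mem_elementaryMatrices_pow (f : Matrix ι ι F →* Matrix κ κ F)
    (hf : Set.MapsTo f (elementaryMatrices ι F) (elementaryMatrices κ F)) {A : Matrix ι ι F}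
    {m : ℕ} (hA : A ∈ elementaryMatrices ι F ^ m) : f A ∈ elementaryMatrices κ F ^ m :=
  Set.pow_subset_pow_left hf.image_subset (Set.image_pow f _ m ▸ Set.mem_image_of_mem f hA)

theorem reindexAlgEquiv_mem_elementaryMatrices_pow (e : ι ≃ κ) {A : Matrix ι ι F} {m : ℕ}
    (hA : A ∈ elementaryMatrices ι F ^ m) :
    reindexAlgEquiv F F e A ∈ elementaryMatrices κ F ^ m :=
  map_mem_elementaryMatrices_pow (reindexAlgEquiv F F e : Matrix ι ι F →* Matrix κ κ F)
    (fun _ => reindexAlgEquiv_mem_elementaryMatrices e) hA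

theorem transpose_mem_elementaryMatrices_pow {A : Matrix ι ι F} {m : ℕ}
    (hA : A ∈ elementaryMatrices ι F ^ m) : Aᵀ ∈ elementaryMatrices ι F ^ m := by
  induction m generalizing A with
  | zero => simp_all
  | succ m ih =>
    rw [pow_succ] at hA
    obtain ⟨B, hB, C, hC, rfl⟩ := hA
    rw [pow_succ']
    exact transpose_mul B C ▸ Set.mul_mem_mul (transpose_mem_elementaryMatrices hC) (ih hB)

theorem fromBlocks_one_mem_elementaryMatrices_pow {A : Matrix κ κ F} {m : ℕ}
    (hA : A ∈ elementaryMatrices κ F ^ m) :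
    fromBlocks A 0 0 (1 : Matrix ι ι F) ∈ elementaryMatrices (κ ⊕ ι) F ^ m := by
  let f : Matrix κ κ F →* Matrix (κ ⊕ ι) (κ ⊕ ι) F :=
    { toFun A := fromBlocks A 0 0 1
      map_one' := fromBlocks_one
      map_mul' A B := by simp [fromBlocks_multiply] }
  exact map_mem_elementaryMatrices_pow f (fun _ => fromBlocks_one_mem_elementaryMatrices) hA

theorem fromBlocks_mem_elementaryMatrices_pow {A : Matrix κ κ F} {B : Matrix ι ι F} {a b : ℕ}
    (hA : A ∈ elementaryMatrices κ F ^ a) (hB : B ∈ elementaryMatrices ι F ^ b) :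
    fromBlocks A 0 0 B ∈ elementaryMatrices (κ ⊕ ι) F ^ (a + b) := by
  have hB' : fromBlocks 1 0 0 B ∈ elementaryMatrices (κ ⊕ ι) F ^ b := by
    simpa [fromBlocks_submatrix_sum_swap_sum_swap] using
      reindexAlgEquiv_mem_elementaryMatrices_pow (Equiv.sumComm ι κ)
        (fromBlocks_one_mem_elementaryMatrices_pow hB)
  have hmul : fromBlocks A 0 0 B = fromBlocks A 0 0 1 * fromBlocks 1 0 0 B := by
    simp [fromBlocks_multiply]
  rw [hmul, pow_add]
  exact Set.mul_mem_mul (fromBlocks_one_mem_elementaryMatrices_pow hA) hB'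

/-- Every invertible matrix is a product of at most `m` elementary matrices, i.e. the general linear
group has width at most `m` with respect to them. -/
def ElementaryWidthLE (ι F : Type*) [DecidableEq ι] [Fintype ι] [Field F] (m : ℕ) : Prop :=
  ∀ A : Matrix ι ι F, IsUnit A → A ∈ elementaryMatrices ι F ^ m

theorem ElementaryWidthLE.mono {a b : ℕ} (h : ElementaryWidthLE ι F a) (hab : a ≤ b) :
    ElementaryWidthLE ι F b :=
  fun A hA => elementaryMatrices_pow_mono hab (h A hA)

theorem ElementaryWidthLE.reindex {m : ℕ} (h : ElementaryWidthLE ι F m) (e : ι ≃ κ) :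
    ElementaryWidthLE κ F m := fun A hA => by
  simpa using reindexAlgEquiv_mem_elementaryMatrices_pow e
    (h (reindexAlgEquiv F F e.symm A) (hA.map _))

theorem elementaryWidthLE_one_of_subsingleton [Subsingleton ι] : ElementaryWidthLE ι F 1 := by
  intro A hA
  have hdiag : A = diagonal A.diag := by
    ext i j
    simp [Subsingleton.elim i j]
  rw [pow_one]
  refine .inr ⟨A.diag, fun i hi => ?_, hdiag.symm⟩
  rw [hdiag, isUnit_diagonal, Pi.isUnit_iff] at hA
  exact (hA i).ne_zero hi

theorem lowerUnipotent_add (Y Z : Matrix ι κ F) :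
    lowerUnipotent (Y + Z) = lowerUnipotent Y * lowerUnipotent Z := by
  simp [lowerUnipotent, fromBlocks_multiply]

theorem lowerUnipotent_sum_mem_pow {α : Type*} (s : Finset α) {Y : α → Matrix ι κ F} {c : α → ℕ}
    (h : ∀ a ∈ s, lowerUnipotent (Y a) ∈ elementaryMatrices (κ ⊕ ι) F ^ c a) :
    lowerUnipotent (∑ a ∈ s, Y a) ∈ elementaryMatrices (κ ⊕ ι) F ^ ∑ a ∈ s, c a := by
  classical
  induction s using Finset.induction_on with
  | empty => simp [lowerUnipotent]
  | insert a s ha ih =>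
    rw [Finset.sum_insert ha, Finset.sum_insert ha, lowerUnipotent_add, pow_add]
    exact Set.mul_mem_mul (h a (s.mem_insert_self a))
      (ih fun b hb => h b (Finset.mem_insert_of_mem hb))

theorem lowerUnipotent_mem_pow_card {Y : Matrix ι κ F} {s : Finset (ι × κ)}
    (hs : ∀ i j, Y i j ≠ 0 → (i, j) ∈ s) :
    lowerUnipotent Y ∈ elementaryMatrices (κ ⊕ ι) F ^ s.card := by
  have hY : Y = ∑ p ∈ s, single p.1 p.2 (Y p.1 p.2) := by
    conv_lhs => rw [matrix_eq_sum_single Y, ← Fintype.sum_prod_type']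
    refine (Finset.sum_subset s.subset_univ fun p _ hp => ?_).symm
    rw [not_not.1 (mt (hs p.1 p.2) hp), single_zero]
  have hsum := lowerUnipotent_sum_mem_pow s (Y := fun p => single p.1 p.2 (Y p.1 p.2))
    (c := fun _ => 1) fun p _ => (pow_one (elementaryMatrices (κ ⊕ ι) F)).symm ▸
      lowerUnipotent_single_mem p.1 p.2 _
  rwa [← hY, ← Finset.card_eq_sum_ones] at hsum

theorem lowerUnipotent_mul_mem_pow {Y : Matrix ι κ F} {G : Matrix κ κ F} {u a : ℕ}
    (hY : lowerUnipotent Y ∈ elementaryMatrices (κ ⊕ ι) F ^ u) (hG : IsUnit G)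
    (ha : ElementaryWidthLE κ F a) :
    lowerUnipotent (Y * G) ∈ elementaryMatrices (κ ⊕ ι) F ^ (u + 2 * a) := by
  have hconj : lowerUnipotent (Y * G) =
      fromBlocks G⁻¹ 0 0 1 * lowerUnipotent Y * fromBlocks G 0 0 1 := by
    simp [lowerUnipotent, fromBlocks_multiply,
      nonsing_inv_mul _ ((isUnit_iff_isUnit_det G).1 hG)]
  rw [hconj, show u + 2 * a = a + u + a by ring, pow_add, pow_add]
  have hcost {H : Matrix κ κ F} (hH : IsUnit H) :=
    fromBlocks_one_mem_elementaryMatrices_pow (ι := ι) (ha H hH)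
  exact Set.mul_mem_mul (Set.mul_mem_mul (hcost (isUnit_nonsing_inv_iff.2 hG)) hY) (hcost hG)

theorem exists_isUnit_row_eq {v : κ → F} (hv : v ≠ 0) :
    ∃ (j : κ) (G : Matrix κ κ F), IsUnit G ∧ G.row j = v := by
  obtain ⟨j, hj⟩ := Function.ne_iff.1 hv
  refine ⟨j, updateRow 1 j v, ?_, updateRow_self⟩
  rw [isUnit_iff_isUnit_det, ← cramer_transpose_apply]
  simpa using hj

theorem lowerUnipotent_vecMulVec_mem_pow {w : ι → F} {s : Finset ι} (hw : ∀ i, w i ≠ 0 → i ∈ s)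
    (v : κ → F) {a : ℕ} (ha : ElementaryWidthLE κ F a) :
    lowerUnipotent (vecMulVec w v) ∈ elementaryMatrices (κ ⊕ ι) F ^ (s.card + 2 * a) := by
  rcases eq_or_ne v 0 with rfl | hv
  · have hzero : vecMulVec w (0 : κ → F) = 0 := ext fun _ _ => mul_zero _
    rw [hzero, lowerUnipotent, fromBlocks_one]
    exact Set.one_mem_pow one_mem_elementaryMatrices
  obtain ⟨j, G, hG, rfl⟩ := exists_isUnit_row_eq hv
  have hcolumn : lowerUnipotent (vecMulVec w (Pi.single j 1)) ∈
      elementaryMatrices (κ ⊕ ι) F ^ s.card := by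
    rw [← mul_one s.card, ← Finset.card_singleton j, ← Finset.card_product]
    refine lowerUnipotent_mem_pow_card fun i l hil => ?_
    simp only [vecMulVec_apply, mul_ne_zero_iff, Pi.single_apply, ite_ne_right_iff] at hil
    simp [hw i hil.1, hil.2.1]
  rw [← single_one_vecMul, ← vecMulVec_mul]
  exact lowerUnipotent_mul_mem_pow hcolumn hG ha

theorem lowerUnipotent_mem_pow [Fintype F] (Y : Matrix ι κ F) {a : ℕ}
    (ha : ElementaryWidthLE κ F a) :
    lowerUnipotent Y ∈ elementaryMatrices (κ ⊕ ι) F ^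
      (Fintype.card ι + Fintype.card F ^ Fintype.card κ * (2 * a)) := by
  classical
  let rowsEq (v : κ → F) : Finset ι := {i | Y.row i = v}
  have hY : Y = ∑ v, vecMulVec (fun i => if Y.row i = v then 1 else 0) v := by
    ext i j
    simp [Matrix.sum_apply, vecMulVec_apply]
  have hcost : ∑ v, ((rowsEq v).card + 2 * a) =
      Fintype.card ι + Fintype.card F ^ Fintype.card κ * (2 * a) := by
    rw [Finset.sum_add_distrib, ← Finset.card_eq_sum_card_fiberwise fun _ _ => Finset.mem_univ _]
    simp
  rw [hY, ← hcost]
  exact lowerUnipotent_sum_mem_pow _ fun v _ =>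
    lowerUnipotent_vecMulVec_mem_pow (fun i hi => by simpa [rowsEq] using hi) v ha

theorem exists_isUnit_add_mul_of_isUnit_fromBlocks {P : Matrix κ κ F} {R : Matrix κ ι F}
    {Q : Matrix ι κ F} {S : Matrix ι ι F} (h : IsUnit (fromBlocks P R Q S)) :
    ∃ X : Matrix κ ι F, IsUnit (P + X * Q) := by
  have hdisjoint : Disjoint P.mulVecLin.ker Q.mulVecLin.ker := by
    refine Submodule.disjoint_def.2 fun v hP hQ => ?_
    rw [LinearMap.mem_ker, mulVecLin_apply] at hP hQ
    have hv : Sum.elim v (0 : ι → F) = 0 := by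
      apply mulVec_injective_iff_isUnit.2 h
      simp [fromBlocks_mulVec, Sum.elim_comp_inl, Sum.elim_comp_inr, hP, hQ]
    exact funext fun x => congrFun hv (.inl x)
  obtain ⟨x, hx⟩ := exists_ker_add_comp_eq_bot hdisjoint
  refine ⟨x.toMatrix', mulVec_injective_iff_isUnit.1 ?_⟩
  have hlin : (P + x.toMatrix' * Q).mulVecLin = P.mulVecLin + x ∘ₗ Q.mulVecLin := by
    rw [mulVecLin_add, mulVecLin_mul, ← toLin'_apply' x.toMatrix', toLin'_toMatrix']
  rw [← coe_mulVecLin, hlin]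
  exact LinearMap.ker_eq_bot.1 hx

theorem exists_eq_unipotent_mul_fromBlocks_mul {A : Matrix (κ ⊕ ι) (κ ⊕ ι) F} (hA : IsUnit A) :
    ∃ (X Z : Matrix κ ι F) (Y : Matrix ι κ F) (U : Matrix κ κ F) (T : Matrix ι ι F),
      IsUnit U ∧ IsUnit T ∧
      A = upperUnipotent X * (lowerUnipotent Y * fromBlocks U 0 0 T * upperUnipotent Z) := by
  obtain ⟨P, R, Q, S, rfl⟩ : ∃ P R Q S, A = fromBlocks P R Q S :=
    ⟨_, _, _, _, (fromBlocks_toBlocks A).symm⟩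
  obtain ⟨X, hX⟩ := exists_isUnit_add_mul_of_isUnit_fromBlocks hA
  let := hX.invertible
  have hpivot : fromBlocks P R Q S =
      upperUnipotent (-X) * fromBlocks (P + X * Q) (R + X * S) Q S := by
    simp [upperUnipotent, fromBlocks_multiply]
  rw [fromBlocks_eq_of_invertible₁₁ (P + X * Q)] at hpivot
  refine ⟨-X, _, _, _, _, hX, ?_, hpivot⟩
  rw [isUnit_iff_isUnit_det, hpivot] at hA
  simp only [upperUnipotent, det_mul, det_fromBlocks_zero₁₂, det_fromBlocks_zero₂₁, det_one,
    one_mul, mul_one] at hA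
  exact (isUnit_iff_isUnit_det _).2 (IsUnit.mul_iff.1 hA).2

theorem ElementaryWidthLE.sum {a b u : ℕ} (ha : ElementaryWidthLE κ F a)
    (hb : ElementaryWidthLE ι F b)
    (hu : ∀ Y : Matrix ι κ F, lowerUnipotent Y ∈ elementaryMatrices (κ ⊕ ι) F ^ u) :
    ElementaryWidthLE (κ ⊕ ι) F (3 * u + a + b) := by
  have hu' (X : Matrix κ ι F) : upperUnipotent X ∈ elementaryMatrices (κ ⊕ ι) F ^ u := by
    simpa [transpose_lowerUnipotent] using transpose_mem_elementaryMatrices_pow (hu Xᵀ)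
  intro A hA
  obtain ⟨X, Z, Y, U, T, hU, hT, rfl⟩ := exists_eq_unipotent_mul_fromBlocks_mul hA
  rw [show 3 * u + a + b = u + (u + (a + b) + u) by ring]
  simp only [pow_add _ u, pow_add _ (u + (a + b)) u]
  exact Set.mul_mem_mul (hu' X) (Set.mul_mem_mul (Set.mul_mem_mul (hu Y)
    (fromBlocks_mem_elementaryMatrices_pow (ha U hU) (hb T hT))) (hu' Z))

theorem elementaryWidthLE_fin (n : ℕ) : ElementaryWidthLE (Fin n) F (3 * n ^ 2) := by
  induction n with
  | zero => exact fun A _ => by simp [Subsingleton.elim A 1]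
  | succ n ih =>
    have hu (Y : Matrix (Fin n) (Fin 1) F) :
        lowerUnipotent Y ∈ elementaryMatrices (Fin 1 ⊕ Fin n) F ^ n := by
      simpa using lowerUnipotent_mem_pow_card (Y := Y) fun i j _ => Finset.mem_univ (i, j)
    have hsum := (elementaryWidthLE_one_of_subsingleton (ι := Fin 1)).sum ih hu
    refine (hsum.reindex (finSumFinEquiv.trans (finCongr (add_comm 1 n)))).mono ?_
    linarith [add_sq n 1]

variable [Fintype F]

theorem elementaryWidthLE_fin_mul_add {k r n : ℕ} (t : ℕ) (h : t * k + r ≤ n) :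
    ElementaryWidthLE (Fin (t * k + r)) F
      (t * (3 * (n + Fintype.card F ^ k * (6 * k ^ 2)) + 3 * k ^ 2) + 3 * r ^ 2) := by
  induction t with
  | zero => exact ((elementaryWidthLE_fin r).reindex (finCongr (by simp))).mono (by simp)
  | succ t ih =>
    have hsize : k + (t * k + r) = (t + 1) * k + r := by ring
    have hk := elementaryWidthLE_fin (F := F) k
    have hsum := hk.sum (ih (by lia)) fun Y => lowerUnipotent_mem_pow Y hk
    refine (hsum.reindex (finSumFinEquiv.trans (finCongr hsize))).mono ?_
    simp only [Fintype.card_fin]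
    linarith

theorem elementaryWidthLE_fin_of_sq_mul_pow_le {k n : ℕ} (hk : 0 < k)
    (hkn : k ^ 2 * Fintype.card F ^ k ≤ n) : ElementaryWidthLE (Fin n) F (27 * n * (n / k)) := by
  have hsq : k ^ 2 ≤ n := (Nat.le_mul_of_pos_right _ (pow_pos Fintype.card_pos k)).trans hkn
  have hquot : 1 ≤ n / k := Nat.div_pos ((Nat.le_self_pow two_ne_zero k).trans hsq) hk
  have hrem : (n % k) ^ 2 ≤ n := (Nat.pow_le_pow_left (n.mod_lt hk).le 2).trans hsq
  have hn : n / k * k + n % k = n := Nat.div_add_mod' n k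
  refine ((elementaryWidthLE_fin_mul_add (n / k) hn.le).reindex (finCongr hn)).mono ?_
  calc n / k * (3 * (n + Fintype.card F ^ k * (6 * k ^ 2)) + 3 * k ^ 2) + 3 * (n % k) ^ 2
      ≤ n / k * (24 * n) + 3 * n := by gcongr; linarith
    _ ≤ 27 * n * (n / k) := by nlinarith

end

theorem sq_mul_pow_le_pow_three_pow {q : ℕ} (hq : 2 ≤ q) (k : ℕ) : k ^ 2 * q ^ k ≤ (q ^ 3) ^ k :=
  calc k ^ 2 * q ^ k ≤ (q ^ k) ^ 2 * q ^ k := by gcongr; exact (Nat.lt_pow_self hq).le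
    _ = (q ^ 3) ^ k := by ring

theorem log_le_six_mul_log_mul_log {q n : ℕ} (hq : 2 ≤ q) (hn : q ^ 3 ≤ n) :
    Real.log n ≤ 6 * Nat.log (q ^ 3) n * Real.log q := by
  have hb : 1 < q ^ 3 := Nat.one_lt_pow three_ne_zero hq
  have hk : (1 : ℝ) ≤ Nat.log (q ^ 3) n := by exact_mod_cast Nat.log_pos hb hn
  have hlt : n ≤ (q ^ 3) ^ (Nat.log (q ^ 3) n + 1) := (Nat.lt_pow_succ_log_self hb n).le
  calc Real.log n ≤ Real.log ((q ^ 3) ^ (Nat.log (q ^ 3) n + 1) : ℕ) :=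
        Real.log_le_log (by exact_mod_cast (hb.trans_le hn).le) (by exact_mod_cast hlt)
    _ = 3 * (Nat.log (q ^ 3) n + 1) * Real.log q := by
        push_cast
        rw [← pow_mul, Real.log_pow]
        push_cast
        ring
    _ ≤ 6 * Nat.log (q ^ 3) n * Real.log q := by
        gcongr ?_ * _
        linarith

theorem exists_elementaryWidthLE_fin (F : Type*) [Field F] [Fintype F] {n : ℕ} (hn : 2 ≤ n) :
    ∃ m : ℕ, ElementaryWidthLE (Fin n) F m ∧
      (m : ℝ) ≤ 162 * (n : ℝ) ^ 2 * Real.log (Fintype.card F) / Real.log n := by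
  have hq : 2 ≤ Fintype.card F := Fintype.one_lt_card
  set q := Fintype.card F
  have hlogn : 0 < Real.log n := Real.log_pos (by exact_mod_cast hn)
  have hlogq : 0 < Real.log q := Real.log_pos (by exact_mod_cast hq)
  rcases lt_or_ge n (q ^ 3) with hlt | hge
  · refine ⟨_, elementaryWidthLE_fin n, (le_div_iff₀ hlogn).2 ?_⟩
    have hlog : Real.log n ≤ 3 * Real.log q := by
      rw [← Nat.cast_ofNat, ← Real.log_pow]
      exact Real.log_le_log (by positivity) (by exact_mod_cast hlt.le)
    calc ((3 * n ^ 2 : ℕ) : ℝ) * Real.log n ≤ 3 * n ^ 2 * (54 * Real.log q) := by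
          push_cast
          gcongr
          linarith
      _ = 162 * n ^ 2 * Real.log q := by ring
  · have hk : 0 < Nat.log (q ^ 3) n := Nat.log_pos (Nat.one_lt_pow three_ne_zero hq) hge
    have hkn := (sq_mul_pow_le_pow_three_pow hq _).trans
      (Nat.pow_log_le_self (q ^ 3) (x := n) (by lia))
    refine ⟨_, elementaryWidthLE_fin_of_sq_mul_pow_le hk hkn, (le_div_iff₀ hlogn).2 ?_⟩
    have hlog := log_le_six_mul_log_mul_log hq hge
    set k := Nat.log (q ^ 3) n
    calc ((27 * n * (n / k) : ℕ) : ℝ) * Real.log n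
        ≤ 27 * n * (n / k) * (6 * k * Real.log q) := by
          push_cast
          gcongr
          exact Nat.cast_div_le
      _ = 162 * n ^ 2 * Real.log q := by field_simp; ring

theorem finite_field_elementary_decomposition_general (F : Type*) [Field F] [Fintype F] {n : ℕ}
    (hn : 2 ≤ n) (A : Matrix (Fin n) (Fin n) F) (hA : IsUnit A) :
    ∃ L : List (Matrix (Fin n) (Fin n) F),
      (∀ B ∈ L, IsElementary B) ∧ L.prod = A ∧
      (L.length : ℝ) ≤ 162 * (n : ℝ) ^ 2 * Real.log (Fintype.card F) / Real.log n := by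
  obtain ⟨m, hwidth, hm⟩ := exists_elementaryWidthLE_fin F hn
  obtain ⟨f, rfl⟩ := Set.mem_pow.1 (hwidth A hA)
  refine ⟨_, fun B hB => ?_, rfl, by simpa using hm⟩
  obtain ⟨i, rfl⟩ := (List.mem_ofFn' _ _).1 hB
  exact isElementary_iff_mem_elementaryMatrices.2 (f i).2

/-- Generalization to a finite field `F` of order `q ≥ 2`: every invertible
`n × n` matrix over `F` is a product of at most
`C · n² · (log q) / (log n)` elementary matrices. -/
theorem finite_field_elementary_decomposition (F : Type*) [Field F] [Fintype F]
    (hq : 2 ≤ Fintype.card F) :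
    ∃ C : ℝ, 0 < C ∧ ∀ n : ℕ, 2 ≤ n →
      ∀ A : Matrix (Fin n) (Fin n) F, IsUnit A →
        ∃ L : List (Matrix (Fin n) (Fin n) F),
          (∀ B ∈ L, IsElementary B) ∧ L.prod = A ∧
          (L.length : ℝ) ≤
            C * (n : ℝ) ^ 2 * Real.log (Fintype.card F) / Real.log n := by
  exact ⟨162, by norm_num, fun _ hn => finite_field_elementary_decomposition_general F hn⟩
end
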